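/- Assume (H5.1), (H5.2), (H5.3), (H5.4) and ψ₁, ψ₂ ≥ α > 0, with γ convex. Then there exist C > 0 and ε₀ ∈ (0,1] such that for every ε ∈ (0,ε₀) and every pair (u₁^ε, u₂^ε) ∈ (C²(U) ∩ C¹(Ū))² solving the penalized obstacle-type system, setting θ_j^ε := u_j^ε − u_{3−j}^ε − ψ_j, one has max_{j=1,2} max_{x ∈ Ū} θ_j^ε(x)/ε ≤ C and max_{j=1,2} max_{x ∈ Ū} γ^ε(θ_j^ε(x)) ≤ C. -/

import Mathlib

open Set Filter

noncomputable def lap {n : ℕ} (u : EuclideanSpace ℝ (Fin n) → ℝ) (x : EuclideanSpace ℝ (Fin n)) : ℝ :=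
  ∑ i : Fin n, fderiv ℝ (fun y => fderiv ℝ u y (EuclideanSpace.single i 1)) x
    (EuclideanSpace.single i 1)

/-!
The penalty can be active only away from `∂U`: subsolutions built from `Φ_j` bound `u_j^ε` from
below, cones with vertex outside `U` bound it from above near `∂U`, and `ψ_j ≥ α > 0` leaves a gap,
so the contact points stay at a fixed distance from `∂U` as `ε → 0`.

In the interior, a gradient bound uniform in `ε` follows by doubling the variables in
`u_j(x) - (1 + κ) u_j(y)` against a concave modulus `K t + K A ε (1 - e^{-t/ε})` of `t = |x - y|`
and a localization `b |x - a|²`. Separated by more than `ε`, the points of a maximum contradict the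
superlinearity of `H_j`; closer than `ε`, they contradict the concavity of the modulus, since the
factor `1 + κ` and the convexity of `H_j` and `γ` control the remaining terms. The maximum
is taken over `j` as well, which compares the penalties at the two points although they couple the
equations. A first pass with strong localization gives the bound up to an arbitrarily small error;
that error allows a weak localization in the second pass, after which `κ → 0`.

Finally, at a positive maximum of `θ_k` the other penalty vanishes, and subtracting the equations
bounds `γ(θ_k / ε)` by `|u|`, `|H_j(x, Du_j)|` and `ε |Δψ_k|`; since `γ → ∞`, also `θ_k / ε` is
bounded.
-/

open scoped Topology Laplacian
open Metric Module InnerProductSpace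

section SecondOrder

theorem deriv_deriv_nonpos_of_isLocalMax {h : ℝ → ℝ} {a : ℝ} (hmax : IsLocalMax h a)
    (hcont : ContinuousAt h a) : deriv (deriv h) a ≤ 0 := by
  by_contra! hpos
  have hmin : IsLocalMin h a := isLocalMin_of_deriv_deriv_pos hpos hmax.deriv_eq_zero hcont
  have hconst : h =ᶠ[𝓝 a] fun _ ↦ h a := by
    filter_upwards [hmax, hmin] with t using le_antisymm
  rw [hconst.deriv.deriv_eq] at hpos
  simp at hpos

theorem deriv_deriv_eq_of_hasDerivAt {h h' : ℝ → ℝ} {a m : ℝ}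
    (hh : ∀ᶠ t in 𝓝 a, HasDerivAt h (h' t) t) (hh' : HasDerivAt h' m a) :
    deriv (deriv h) a = m := by
  have hderiv : deriv h =ᶠ[𝓝 a] h' := hh.mono fun _ ht ↦ ht.deriv
  rw [hderiv.deriv_eq, hh'.deriv]

variable {E : Type*} [NormedAddCommGroup E] [InnerProductSpace ℝ E]

theorem hasDerivAt_add_smul (x v : E) (t : ℝ) : HasDerivAt (fun t : ℝ ↦ x + t • v) v t := by
  simpa using ((hasDerivAt_id t).smul_const v).const_add x

theorem deriv_deriv_comp_add_smul {f : E → ℝ} {x : E} (hf : ContDiffAt ℝ 2 f x) (v : E) :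
    deriv (deriv fun t : ℝ ↦ f (x + t • v)) 0 = fderiv ℝ (fderiv ℝ f) x v v := by
  have hline : Tendsto (fun t : ℝ ↦ x + t • v) (𝓝 0) (𝓝 x) := by
    simpa using (hasDerivAt_add_smul x v 0).continuousAt.tendsto
  have hdiff : ∀ᶠ y in 𝓝 x, DifferentiableAt ℝ f y := by
    filter_upwards [hf.eventually (by simp)] with y hy using hy.differentiableAt (by simp)
  refine deriv_deriv_eq_of_hasDerivAt (h' := fun t ↦ fderiv ℝ f (x + t • v) v) ?_ ?_
  · filter_upwards [hline.eventually hdiff] with t ht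
    exact ht.hasFDerivAt.comp_hasDerivAt t (hasDerivAt_add_smul x v t)
  · have hfderiv : HasFDerivAt (fderiv ℝ f) (fderiv ℝ (fderiv ℝ f) x) (x + (0 : ℝ) • v) := by
      have hsmooth : ContDiffAt ℝ 1 (fderiv ℝ f) x := hf.fderiv_right (by norm_num)
      simpa only [zero_smul, add_zero] using (hsmooth.differentiableAt one_ne_zero).hasFDerivAt
    have hcomp := hfderiv.comp_hasDerivAt (0 : ℝ) (hasDerivAt_add_smul x v 0)
    simpa using hcomp.clm_apply (hasDerivAt_const (0 : ℝ) v)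

variable [FiniteDimensional ℝ E] {ι : Type*} [Fintype ι]

theorem laplacian_eq_sum_deriv_deriv (e : OrthonormalBasis ι ℝ E) {f : E → ℝ} {x : E}
    (hf : ContDiffAt ℝ 2 f x) :
    Δ f x = ∑ i, deriv (deriv fun t : ℝ ↦ f (x + t • e i)) 0 := by
  rw [laplacian_eq_iteratedFDeriv_orthonormalBasis f e]
  simp_rw [deriv_deriv_comp_add_smul hf, iteratedFDeriv_two_apply]
  rfl

theorem laplacian_nonpos_of_isLocalMax {f : E → ℝ} {x : E} (hf : ContDiffAt ℝ 2 f x)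
    (hmax : IsLocalMax f x) : Δ f x ≤ 0 := by
  rw [laplacian_eq_sum_deriv_deriv (stdOrthonormalBasis ℝ E) hf]
  refine Finset.sum_nonpos fun i _ ↦ ?_
  have hline : ContinuousAt (fun t : ℝ ↦ x + t • stdOrthonormalBasis ℝ E i) 0 := by fun_prop
  refine deriv_deriv_nonpos_of_isLocalMax ?_ ?_
  · have hmax0 : IsLocalMax f (x + (0 : ℝ) • stdOrthonormalBasis ℝ E i) := by simpa using hmax
    exact IsMaxFilter.comp_tendsto hmax0 hline
  · exact ContinuousAt.comp (by simpa using hf.continuousAt) hline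

theorem laplacian_le_of_isLocalMax_sub {f g : E → ℝ} {x : E} (hf : ContDiffAt ℝ 2 f x)
    (hg : ContDiffAt ℝ 2 g x) (hmax : IsLocalMax (fun y ↦ f y - g y) x) : Δ f x ≤ Δ g x := by
  have h : Δ (f - g) x ≤ 0 := laplacian_nonpos_of_isLocalMax (hf.sub hg) hmax
  rwa [hf.laplacian_sub hg, sub_nonpos] at h

theorem laplacian_comp_add_linearIsometryEquiv {f : E → ℝ} {y : E} (hf : ContDiffAt ℝ 2 f y)
    (R : E ≃ₗᵢ[ℝ] E) : Δ (fun h ↦ f (y + R h)) 0 = Δ f y := by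
  have hcomp : ContDiffAt ℝ 2 (fun h ↦ f (y + R h)) 0 :=
    ContDiffAt.comp (g := f) (0 : E) (by simpa using hf)
      (contDiffAt_const.add R.toContinuousLinearEquiv.contDiff.contDiffAt)
  rw [laplacian_eq_sum_deriv_deriv (stdOrthonormalBasis ℝ E) hcomp,
    laplacian_eq_sum_deriv_deriv ((stdOrthonormalBasis ℝ E).map R) hf]
  simp

theorem laplacian_norm_sub_sq (a x : E) :
    Δ (fun y ↦ ‖y - a‖ ^ 2) x = 2 * (finrank ℝ E : ℝ) := by
  have hsmooth : ContDiffAt ℝ 2 (fun y ↦ ‖y - a‖ ^ 2) x :=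
    ((contDiff_id.sub contDiff_const).norm_sq ℝ).contDiffAt
  rw [laplacian_eq_sum_deriv_deriv (stdOrthonormalBasis ℝ E) hsmooth]
  suffices ∀ i, deriv (deriv fun t : ℝ ↦ ‖x + t • stdOrthonormalBasis ℝ E i - a‖ ^ 2) 0 = 2 by
    simp [this, mul_comm]
  intro i
  set e := stdOrthonormalBasis ℝ E i
  have he : ‖e‖ = 1 := (stdOrthonormalBasis ℝ E).norm_eq_one i
  refine deriv_deriv_eq_of_hasDerivAt
    (h' := fun t ↦ 2 * (inner ℝ (x - a) e + t)) (Eventually.of_forall fun t ↦ ?_) ?_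
  · convert ((hasDerivAt_add_smul x e t).sub_const a).norm_sq using 1
    rw [add_sub_right_comm, inner_add_left, real_inner_smul_left, real_inner_self_eq_norm_sq, he]
    ring
  · simpa using ((hasDerivAt_id (0 : ℝ)).const_add (inner ℝ (x - a) e)).const_mul 2

theorem laplacian_comp_inner {φ φ' : ℝ → ℝ} {m : ℝ} (w x : E)
    (hφ : ContDiffAt ℝ 2 φ (inner ℝ w x)) (hφ' : ∀ s, HasDerivAt φ (φ' s) s)
    (hm : HasDerivAt φ' m (inner ℝ w x)) :
    Δ (fun y ↦ φ (inner ℝ w y)) x = m * ‖w‖ ^ 2 := by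
  have hinner : ContDiff ℝ 2 (fun y ↦ inner ℝ w y) := contDiff_const.inner ℝ contDiff_id
  have hsmooth : ContDiffAt ℝ 2 (fun y ↦ φ (inner ℝ w y)) x := hφ.comp x hinner.contDiffAt
  set e := stdOrthonormalBasis ℝ E
  rw [laplacian_eq_sum_deriv_deriv e hsmooth, ← e.sum_sq_inner_right, Finset.mul_sum]
  refine Finset.sum_congr rfl fun i _ ↦ ?_
  have hline (t : ℝ) : HasDerivAt (fun t : ℝ ↦ inner ℝ w (x + t • e i)) (inner ℝ w (e i)) t := by
    simpa using (hasDerivAt_const t w).inner ℝ (hasDerivAt_add_smul x (e i) t)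
  refine deriv_deriv_eq_of_hasDerivAt
    (h' := fun t ↦ φ' (inner ℝ w (x + t • e i)) * inner ℝ w (e i)) ?_ ?_
  · exact Eventually.of_forall fun t ↦ (hφ' _).comp t (hline t)
  · have hm0 : HasDerivAt φ' m (inner ℝ w (x + (0 : ℝ) • e i)) := by simpa using hm
    refine ((hm0.comp (0 : ℝ) (hline 0)).mul_const (inner ℝ w (e i))).congr_deriv ?_
    rw [real_inner_comm w]
    ring

end SecondOrder

theorem lap_eq_laplacian {n : ℕ} {u : EuclideanSpace ℝ (Fin n) → ℝ} {x : EuclideanSpace ℝ (Fin n)}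
    (hu : ContDiffAt ℝ 2 u x) : lap u x = Δ u x := by
  have hsmooth : ContDiffAt ℝ 1 (fderiv ℝ u) x := hu.fderiv_right (by norm_num)
  have hfderiv := (hsmooth.differentiableAt one_ne_zero).hasFDerivAt
  rw [laplacian_eq_sum_deriv_deriv (EuclideanSpace.basisFun (Fin n) ℝ) hu]
  refine Finset.sum_congr rfl fun i _ ↦ ?_
  rw [deriv_deriv_comp_add_smul hu, (hfderiv.clm_apply (hasFDerivAt_const _ x)).fderiv]
  simp

section Dirichlet

variable {E : Type*} [NormedAddCommGroup E] [InnerProductSpace ℝ E] {U : Set E}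

theorem exists_smul_exit_point (hU : IsOpen U) {x v : E} (hx : x ∈ U) (hxv : x + v ∉ U) :
    ∃ s ∈ Ioc (0 : ℝ) 1, x + s • v ∈ frontier U ∧ ∀ t ∈ Ico (0 : ℝ) 1, x + t • s • v ∈ U := by
  have hline : Continuous fun t : ℝ ↦ x + t • v := by fun_prop
  have hcompact : IsCompact (Icc (0 : ℝ) 1 ∩ (fun t : ℝ ↦ x + t • v) ⁻¹' Uᶜ) :=
    isCompact_Icc.inter_right (hU.isClosed_compl.preimage hline)
  obtain ⟨s, ⟨⟨hs0, hs1⟩, hsU⟩, hleast⟩ := hcompact.exists_isLeast ⟨1, by simp, by simpa using hxv⟩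
  have hs : 0 < s := hs0.lt_of_ne fun h ↦ hsU (by simpa [← h] using hx)
  have hinside : ∀ t ∈ Ico 0 s, x + t • v ∈ U := fun t ht ↦ by
    by_contra htU
    exact ht.2.not_ge (hleast ⟨⟨ht.1, ht.2.le.trans hs1⟩, htU⟩)
  have hclosure : x + s • v ∈ closure U := by
    have hmem : s ∈ closure (Ico 0 s) := by simp [closure_Ico hs.ne, hs0]
    exact map_mem_closure (f := fun t : ℝ ↦ x + t • v) hline hmem hinside
  refine ⟨s, ⟨hs, hs1⟩, hU.frontier_eq ▸ ⟨hclosure, hsU⟩, fun t ht ↦ ?_⟩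
  rw [smul_smul]
  exact hinside _ ⟨mul_nonneg ht.1 hs0, mul_lt_of_lt_one_left hs ht.2⟩

/-- `f` is differentiable in `U`, continuous up to the boundary, and has zero boundary values. -/
structure IsDirichletOn (f : E → ℝ) (U : Set E) : Prop where
  differentiableOn : DifferentiableOn ℝ f U
  continuousOn : ContinuousOn f (closure U)
  eq_zero : ∀ x ∈ frontier U, f x = 0

variable {f : E → ℝ}

namespace IsDirichletOn

theorem neg (hf : IsDirichletOn f U) : IsDirichletOn (fun x ↦ -f x) U where
  differentiableOn := hf.differentiableOn.neg
  continuousOn := hf.continuousOn.neg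
  eq_zero x hx := by rw [hf.eq_zero x hx, neg_zero]

theorem const_mul (hf : IsDirichletOn f U) (t : ℝ) : IsDirichletOn (fun x ↦ t * f x) U where
  differentiableOn := hf.differentiableOn.const_mul t
  continuousOn := hf.continuousOn.const_mul t
  eq_zero x hx := by rw [hf.eq_zero x hx, mul_zero]

end IsDirichletOn

variable [CompleteSpace E]

theorem gradient_const_mul (f : E → ℝ) (t : ℝ) (x : E) :
    gradient (fun y ↦ t * f y) x = t • gradient f x := by
  have hfderiv : fderiv ℝ (fun y ↦ t * f y) x = t • fderiv ℝ f x :=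
    congr_fun (fderiv_const_smul_field t) x
  rw [gradient, hfderiv, map_smul, gradient]

theorem abs_sub_sub_inner_le_of_norm_gradient_sub_le (hU : IsOpen U)
    (hf : DifferentiableOn ℝ f U) (hcont : ContinuousOn f (closure U)) {x v q : E} {ω : ℝ}
    (hpath : ∀ t ∈ Ico (0 : ℝ) 1, x + t • v ∈ U)
    (hgrad : ∀ t ∈ Ico (0 : ℝ) 1, ‖gradient f (x + t • v) - q‖ ≤ ω) :
    |f (x + v) - f x - inner ℝ q v| ≤ ω * ‖v‖ := by
  have hline : Continuous fun t : ℝ ↦ x + t • v := by fun_prop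
  have hclosure : MapsTo (fun t : ℝ ↦ x + t • v) (Icc 0 1) (closure U) := fun t ht ↦ by
    rw [← closure_Ico zero_ne_one] at ht
    exact map_mem_closure (f := fun t : ℝ ↦ x + t • v) hline ht hpath
  have hderiv : ∀ t ∈ Ico (0 : ℝ) 1, HasDerivAt (fun t : ℝ ↦ f (x + t • v) - t * inner ℝ q v)
      (inner ℝ (gradient f (x + t • v) - q) v) t := fun t ht ↦ by
    have hft := (hf.differentiableAt (hU.mem_nhds (hpath t ht))).hasFDerivAt
    refine ((hft.comp_hasDerivAt t (hasDerivAt_add_smul x v t)).sub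
      ((hasDerivAt_id t).mul_const (inner ℝ q v))).congr_deriv ?_
    rw [inner_sub_left, inner_gradient_left, one_mul]
  have hmvt := norm_image_sub_le_of_norm_deriv_right_le_segment (C := ω * ‖v‖)
    (f := fun t : ℝ ↦ f (x + t • v) - t * inner ℝ q v)
    ((hcont.comp hline.continuousOn hclosure).sub (by fun_prop))
    (fun t ht ↦ (hderiv t ht).hasDerivWithinAt)
    (fun t ht ↦ (norm_inner_le_norm _ _).trans (by gcongr; exact hgrad t ht)) 1
    (right_mem_Icc.2 zero_le_one)
  simpa [sub_right_comm] using hmvt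

namespace IsDirichletOn

variable {S : Set E} {L : ℝ}

theorem abs_le_of_notMem (hU : IsOpen U) (hf : IsDirichletOn f U) (hS : Convex ℝ S)
    (hL : ∀ x ∈ U ∩ S, ‖gradient f x‖ ≤ L) {x y : E} (hx : x ∈ U ∩ S) (hyU : y ∉ U)
    (hyS : y ∈ S) : |f x| ≤ L * ‖x - y‖ := by
  have hL0 : 0 ≤ L := (norm_nonneg _).trans (hL x hx)
  obtain ⟨s, ⟨hs0, hs1⟩, hfrontier, hpath⟩ :=
    exists_smul_exit_point hU hx.1 (v := y - x) (by rwa [add_sub_cancel])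
  have hgrad : ∀ t ∈ Ico (0 : ℝ) 1, ‖gradient f (x + t • s • (y - x)) - 0‖ ≤ L := fun t ht ↦ by
    rw [sub_zero]
    refine hL _ ⟨hpath t ht, ?_⟩
    rw [smul_smul]
    exact hS.add_smul_sub_mem hx.2 hyS ⟨by nlinarith [ht.1], by nlinarith [ht.1, ht.2]⟩
  have hmvt := abs_sub_sub_inner_le_of_norm_gradient_sub_le hU hf.differentiableOn
    hf.continuousOn hpath hgrad
  rw [hf.eq_zero _ hfrontier, inner_zero_left, zero_sub, sub_zero, abs_neg, norm_smul,
    Real.norm_of_nonneg hs0.le, norm_sub_rev] at hmvt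
  calc |f x| ≤ L * (s * ‖x - y‖) := hmvt
    _ ≤ L * ‖x - y‖ := by gcongr; exact mul_le_of_le_one_left (norm_nonneg _) hs1

theorem abs_sub_le (hU : IsOpen U) (hf : IsDirichletOn f U) (hS : Convex ℝ S)
    (hL : ∀ x ∈ U ∩ S, ‖gradient f x‖ ≤ L) {x y : E} (hx : x ∈ U ∩ S) (hy : y ∈ U ∩ S) :
    |f x - f y| ≤ L * ‖x - y‖ := by
  by_cases hseg : ∀ t ∈ Icc (0 : ℝ) 1, y + t • (x - y) ∈ U
  · have hmvt := abs_sub_sub_inner_le_of_norm_gradient_sub_le (q := 0) (ω := L) hU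
      hf.differentiableOn hf.continuousOn (fun t ht ↦ hseg t ⟨ht.1, ht.2.le⟩) fun t ht ↦ by
        rw [sub_zero]
        exact hL _ ⟨hseg t ⟨ht.1, ht.2.le⟩, hS.add_smul_sub_mem hy.2 hx.2 ⟨ht.1, ht.2.le⟩⟩
    simpa using hmvt
  · push Not at hseg
    obtain ⟨t, ht, hwU⟩ := hseg
    have hwS := hS.add_smul_sub_mem hy.2 hx.2 ht
    have hfx := hf.abs_le_of_notMem hU hS hL hx hwU hwS
    have hfy := hf.abs_le_of_notMem hU hS hL hy hwU hwS
    rw [show x - (y + t • (x - y)) = (1 - t) • (x - y) by module, norm_smul,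
      Real.norm_of_nonneg (sub_nonneg.2 ht.2)] at hfx
    rw [sub_add_cancel_left, norm_neg, norm_smul, Real.norm_of_nonneg ht.1] at hfy
    linarith [abs_sub (f x) (f y)]

theorem differentiableAt_of_mem_interior_closure (hU : IsOpen U) (hf : IsDirichletOn f U)
    (hgrad : ContinuousOn (gradient f) (closure U)) {x : E} (hx : x ∈ interior (closure U)) :
    DifferentiableAt ℝ f x := by
  by_cases hxU : x ∈ U
  · exact hf.differentiableOn.differentiableAt (hU.mem_nhds hxU)
  have hfx : f x = 0 := hf.eq_zero x (hU.frontier_eq ▸ ⟨interior_subset hx, hxU⟩)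
  by_contra hndiff
  have hgx : gradient f x = 0 := by simp [gradient, fderiv_zero_of_not_differentiableAt hndiff]
  refine hndiff (HasFDerivAt.differentiableAt (f' := 0) ?_)
  rw [hasFDerivAt_iff_isLittleO, Asymptotics.isLittleO_iff]
  intro σ hσ
  obtain ⟨d, hd, hgd⟩ := Metric.continuousWithinAt_iff.1 (hgrad x (interior_subset hx)) σ hσ
  have hbound : ∀ y ∈ U ∩ ball x d, ‖gradient f y‖ ≤ σ := fun y hy ↦ by
    simpa [hgx] using (hgd (subset_closure hy.1) hy.2).le
  filter_upwards [ball_mem_nhds x hd, mem_interior_iff_mem_nhds.1 hx] with y hyd hyU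
  rw [hfx, zero_apply, sub_zero, sub_zero, Real.norm_eq_abs]
  by_cases hy : y ∈ U
  · exact hf.abs_le_of_notMem hU (convex_ball x d) hbound ⟨hy, hyd⟩ hxU (mem_ball_self hd)
  · rw [hf.eq_zero y (hU.frontier_eq ▸ ⟨hyU, hy⟩), abs_zero]
    positivity

theorem add_smul_mem (hU : IsOpen U) (hf : IsDirichletOn f U) {x v q : E} {ω : ℝ} (hx : x ∈ U)
    (hfx : 0 ≤ f x)
    (hgrad : ∀ t ∈ Icc (0 : ℝ) 1, x + t • v ∈ U → ‖gradient f (x + t • v) - q‖ ≤ ω)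
    (hq : ω * ‖v‖ < inner ℝ q v) : ∀ s ∈ Icc (0 : ℝ) 1, x + s • v ∈ U := by
  intro s hs
  by_contra hsU
  obtain ⟨r, ⟨hr0, hr1⟩, hfrontier, hpath⟩ := exists_smul_exit_point hU hx hsU
  simp only [smul_smul r] at hfrontier hpath
  have hrs : 0 ≤ r * s := mul_nonneg hr0.le hs.1
  have hmvt := abs_sub_sub_inner_le_of_norm_gradient_sub_le (q := q) (ω := ω) hU
    hf.differentiableOn hf.continuousOn hpath fun t ht ↦ by
      have htU := hpath t ht
      rw [smul_smul] at htU ⊢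
      have hrs1 : r * s ≤ 1 := mul_le_one₀ hr1 hs.1 hs.2
      exact hgrad _ ⟨mul_nonneg ht.1 hrs, mul_le_one₀ ht.2.le hrs hrs1⟩ htU
  rw [hf.eq_zero _ hfrontier, inner_smul_right, norm_smul, Real.norm_of_nonneg hrs]
    at hmvt
  have hs0 : 0 < s := hs.1.lt_of_ne fun h ↦ hsU (by simpa [← h] using hx)
  nlinarith [(abs_le.1 hmvt).1, mul_pos hr0 hs0]

theorem abs_add_sub_sub_inner_le (hU : IsOpen U) (hf : IsDirichletOn f U) {x v q : E} {ω : ℝ}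
    (hx : x ∈ U) (hfx : 0 ≤ f x)
    (hgrad : ∀ t ∈ Icc (0 : ℝ) 1, x + t • v ∈ U → ‖gradient f (x + t • v) - q‖ ≤ ω)
    (hq : ω * ‖v‖ < inner ℝ q v) : |f (x + v) - f x - inner ℝ q v| ≤ ω * ‖v‖ := by
  have hray := hf.add_smul_mem hU hx hfx hgrad hq
  exact abs_sub_sub_inner_le_of_norm_gradient_sub_le hU hf.differentiableOn hf.continuousOn
    (fun t ht ↦ hray t (Ico_subset_Icc_self ht))
    fun t ht ↦ hgrad t (Ico_subset_Icc_self ht) (hray t (Ico_subset_Icc_self ht))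

variable {z q : E} {ω r : ℝ}

-- From `x` and `w` one can walk up the gradient to the common point `w + 4r q / ‖q‖` without
-- leaving `U`, because `f` increases along both rays.
theorem abs_sub_sub_inner_le_of_nonneg (hU : IsOpen U) (hf : IsDirichletOn f U) (hω : 0 ≤ ω)
    (hgrad : ∀ x ∈ U ∩ ball z (8 * r), ‖gradient f x - q‖ ≤ ω) (hq : 3 * ω < ‖q‖) {x w : E}
    (hx : x ∈ U ∩ ball z r) (hw : w ∈ U ∩ ball z r) (hfx : 0 ≤ f x) (hfw : 0 ≤ f w) :
    |f x - f w - inner ℝ q (x - w)| ≤ 10 * ω * r := by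
  have hr : 0 < r := pos_of_mem_ball hx.2
  have hstep {a v : E} (ha : a ∈ U ∩ ball z r) (hfa : 0 ≤ f a) (hv : ‖v‖ ≤ 6 * r)
      (hqv : 2 * r * ‖q‖ ≤ inner ℝ q v) : |f (a + v) - f a - inner ℝ q v| ≤ ω * ‖v‖ := by
    refine hf.abs_add_sub_sub_inner_le hU ha.1 hfa (fun t ht htU ↦ hgrad _ ⟨htU, ?_⟩) (by nlinarith)
    have htv : ‖t • v‖ ≤ 6 * r := by
      rw [norm_smul, Real.norm_of_nonneg ht.1]
      exact (mul_le_of_le_one_left (norm_nonneg v) ht.2).trans hv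
    have haz : ‖a - z‖ < r := mem_ball_iff_norm.1 ha.2
    rw [mem_ball_iff_norm, add_sub_right_comm]
    linarith [norm_add_le (a - z) (t • v)]
  have hwx : ‖w - x‖ ≤ 2 * r := by
    rw [← dist_eq_norm]
    linarith [dist_triangle_right w x z, mem_ball.1 hx.2, mem_ball.1 hw.2]
  have hinner : |inner ℝ q (w - x)| ≤ ‖q‖ * (2 * r) :=
    (abs_real_inner_le_norm _ _).trans (by gcongr)
  have hq0 : 0 < ‖q‖ := by linarith
  set v : E := (4 * r / ‖q‖) • q with hv
  have hnorm : ‖v‖ = 4 * r := by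
    rw [hv, norm_smul, Real.norm_of_nonneg (by positivity), div_mul_cancel₀ _ hq0.ne']
  have hqv : inner ℝ q v = 4 * r * ‖q‖ := by
    rw [hv, inner_smul_right, real_inner_self_eq_norm_sq]
    field_simp
  have hwv : ‖w - x + v‖ ≤ 6 * r := (norm_add_le _ _).trans (by linarith)
  have hfromx := hstep hx hfx hwv (by
    rw [inner_add_right, hqv]
    linarith [(abs_le.1 hinner).1])
  have hfromw := hstep hw hfw (v := v) (by linarith) (by rw [hqv]; nlinarith)
  have hwvω : ω * ‖w - x + v‖ ≤ ω * (6 * r) := by gcongr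
  rw [← add_assoc, add_sub_cancel, inner_add_right, ← neg_sub x w, inner_neg_right, neg_sub]
    at hfromx
  rw [hnorm] at hfromw
  rw [abs_le] at hfromx hfromw ⊢
  constructor <;> linarith

theorem abs_sub_sub_inner_le_of_mul_nonneg (hU : IsOpen U) (hf : IsDirichletOn f U) (hω : 0 ≤ ω)
    (hgrad : ∀ x ∈ U ∩ ball z (8 * r), ‖gradient f x - q‖ ≤ ω) (hq : 3 * ω < ‖q‖) {x w : E}
    (hx : x ∈ U ∩ ball z r) (hw : w ∈ U ∩ ball z r) (hsign : 0 ≤ f x * f w) :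
    |f x - f w - inner ℝ q (x - w)| ≤ 10 * ω * r := by
  rcases mul_nonneg_iff.1 hsign with ⟨hfx, hfw⟩ | ⟨hfx, hfw⟩
  · exact hf.abs_sub_sub_inner_le_of_nonneg hU hω hgrad hq hx hw hfx hfw
  · have hneg := hf.neg.abs_sub_sub_inner_le_of_nonneg (q := -q) hU hω (fun y hy ↦ by
      have hgy : gradient (fun x ↦ -f x) y = -gradient f y := by simp [gradient, fderiv_fun_neg]
      rw [hgy, ← neg_sub', norm_neg]
      exact hgrad y hy) (by rwa [norm_neg]) hx hw (neg_nonneg.2 hfx) (neg_nonneg.2 hfw)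
    rwa [inner_neg_left, ← abs_neg, show -(-f x - -f w - -inner ℝ q (x - w)) =
      f x - f w - inner ℝ q (x - w) by ring] at hneg

theorem abs_sub_sub_inner_le_of_norm_le (hU : IsOpen U) (hf : IsDirichletOn f U)
    (hω : 0 ≤ ω) (hgrad : ∀ x ∈ U ∩ ball z (8 * r), ‖gradient f x - q‖ ≤ ω) (hq : ‖q‖ ≤ 3 * ω)
    {x : E} (hx : x ∈ U ∩ ball z r) (hz : z ∈ U ∩ ball z r) :
    |f x - f z - inner ℝ q (x - z)| ≤ 7 * ω * r := by
  have hr : 0 < r := pos_of_mem_ball hz.2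
  have hflat : ∀ y ∈ U ∩ ball z r, ‖gradient f y‖ ≤ 4 * ω := fun y hy ↦ by
    have hy' := hgrad y ⟨hy.1, ball_subset_ball (by linarith) hy.2⟩
    linarith [norm_le_norm_sub_add (gradient f y) q]
  have hinner : |inner ℝ q (x - z)| ≤ 3 * ω * ‖x - z‖ :=
    (abs_real_inner_le_norm _ _).trans (by gcongr)
  have hxz : ω * ‖x - z‖ ≤ ω * r := by
    gcongr
    exact (mem_ball_iff_norm.1 hx.2).le
  linarith [hf.abs_sub_le hU (convex_ball z r) hflat hx hz,
    _root_.abs_sub (f x - f z) (inner ℝ q (x - z))]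

theorem abs_sub_sub_inner_le_of_mem_connectedComponentIn (hU : IsOpen U) (hf : IsDirichletOn f U)
    (hω : 0 ≤ ω) (hgrad : ∀ x ∈ U ∩ ball z (8 * r), ‖gradient f x - q‖ ≤ ω)
    (hz : z ∈ U ∩ ball z r) {x : E} (hx : x ∈ connectedComponentIn (U ∩ ball z r) z) :
    |f x - f z - inner ℝ q (x - z)| ≤ 20 * ω * r := by
  set V := connectedComponentIn (U ∩ ball z r) z
  have hsub : V ⊆ U ∩ ball z r := connectedComponentIn_subset _ _
  have hr : 0 < r := pos_of_mem_ball hz.2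
  have hωr : 0 ≤ ω * r := by positivity
  rcases le_or_gt ‖q‖ (3 * ω) with hq | hq
  · linarith [hf.abs_sub_sub_inner_le_of_norm_le hU hω hgrad hq (hsub hx) hz]
  rcases le_or_gt 0 (f x * f z) with hsign | hsign
  · linarith [hf.abs_sub_sub_inner_le_of_mul_nonneg hU hω hgrad hq (hsub hx) hz hsign]
  obtain ⟨w, hw, hfw⟩ : ∃ w ∈ V, f w = 0 := by
    have hconn : IsPreconnected V := isPreconnected_connectedComponentIn
    have hzV : z ∈ V := mem_connectedComponentIn hz
    have hfV : ContinuousOn f V := hf.continuousOn.mono fun y hy ↦ subset_closure (hsub hy).1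
    rcases mul_neg_iff.1 hsign with ⟨hfx, hfz⟩ | ⟨hfx, hfz⟩
    · exact hconn.intermediate_value hzV hx hfV ⟨hfz.le, hfx.le⟩
    · exact hconn.intermediate_value hx hzV hfV ⟨hfx.le, hfz.le⟩
  have hxw := hf.abs_sub_sub_inner_le_of_mul_nonneg hU hω hgrad hq (hsub hx) (hsub hw)
    (by rw [hfw, mul_zero])
  have hzw := hf.abs_sub_sub_inner_le_of_mul_nonneg hU hω hgrad hq hz (hsub hw)
    (by rw [hfw, mul_zero])
  rw [← sub_sub_sub_cancel_right x z w, inner_sub_right]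
  rw [abs_le] at hxw hzw ⊢
  constructor <;> linarith

end IsDirichletOn

end Dirichlet

section Touching

variable {E : Type*} [NormedAddCommGroup E] [InnerProductSpace ℝ E] {f g : E → ℝ} {x : E}

theorem gradient_eq_of_isLocalMax_sub [CompleteSpace E] (hf : DifferentiableAt ℝ f x)
    (hg : DifferentiableAt ℝ g x) (hmax : IsLocalMax (fun y ↦ f y - g y) x) :
    gradient f x = gradient g x := by
  have hfderiv : fderiv ℝ f x - fderiv ℝ g x = 0 :=
    hmax.hasFDerivAt_eq_zero (hf.hasFDerivAt.sub hg.hasFDerivAt)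
  rw [gradient, sub_eq_zero.1 hfderiv, gradient]

theorem hasGradientAt_quadratic [CompleteSpace E] (x p : E) (k c : ℝ) :
    HasGradientAt (fun y ↦ c + inner ℝ p (y - x) + k / 2 * ‖y - x‖ ^ 2) p x := by
  rw [hasGradientAt_iff_hasFDerivAt]
  have hsub : HasFDerivAt (fun y : E ↦ y - x) (.id ℝ E) x := (hasFDerivAt_id x).sub_const x
  have hinner : HasFDerivAt (fun y ↦ inner ℝ p (y - x)) (innerSL ℝ p) x :=
    (innerSL ℝ p).hasFDerivAt.comp x hsub
  refine ((hinner.const_add c).add (hsub.norm_sq.const_mul (k / 2))).congr_fderiv ?_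
  ext v
  simp

theorem contDiff_quadratic (x p : E) (k c : ℝ) :
    ContDiff ℝ 2 fun y ↦ c + inner ℝ p (y - x) + k / 2 * ‖y - x‖ ^ 2 := by
  have hsub : ContDiff ℝ 2 fun y : E ↦ y - x := contDiff_id.sub contDiff_const
  exact (contDiff_const.add (contDiff_const.inner ℝ hsub)).add
    (contDiff_const.mul (hsub.norm_sq ℝ))

theorem norm_add_le_quadratic {z : E} (hz : z ≠ 0) (h : E) :
    ‖z + h‖ ≤ ‖z‖ + inner ℝ (‖z‖⁻¹ • z) h + ‖z‖⁻¹ / 2 * ‖h‖ ^ 2 := by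
  have hpos : 0 < ‖z‖ := norm_pos_iff.2 hz
  have hsq : ‖z + h‖ ^ 2 = ‖z‖ ^ 2 + 2 * inner ℝ z h + ‖h‖ ^ 2 := norm_add_sq_real z h
  rw [real_inner_smul_left, ← mul_le_mul_iff_right₀ hpos]
  field_simp
  nlinarith [sq_nonneg (‖z + h‖ - ‖z‖)]

variable [FiniteDimensional ℝ E]

theorem laplacian_quadratic (x p : E) (k c : ℝ) :
    Δ (fun y ↦ (c + inner ℝ p (y - x) + k / 2 * ‖y - x‖ ^ 2 : ℝ)) x = (finrank ℝ E : ℝ) * k := by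
  rw [laplacian_eq_sum_deriv_deriv (stdOrthonormalBasis ℝ E)
    (contDiff_quadratic x p k c).contDiffAt]
  suffices ∀ s, deriv (deriv fun t : ℝ ↦ c + t * s + k / 2 * t ^ 2) 0 = k by
    simp [this, inner_smul_right, norm_smul]
  intro s
  refine deriv_deriv_eq_of_hasDerivAt (h' := fun t ↦ s + k * t)
    (Eventually.of_forall fun t ↦ ?_) ?_
  · refine ((((hasDerivAt_id t).mul_const s).const_add c).add
      ((hasDerivAt_pow 2 t).const_mul (k / 2))).congr_deriv ?_
    push_cast
    ring
  · simpa using ((hasDerivAt_id (0 : ℝ)).const_mul k).const_add s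

theorem gradient_eq_and_laplacian_le_of_le_quadratic {p : E} {k : ℝ} (hf : ContDiffAt ℝ 2 f x)
    (htouch : ∀ᶠ y in 𝓝 x, f y ≤ f x + inner ℝ p (y - x) + k / 2 * ‖y - x‖ ^ 2) :
    gradient f x = p ∧ Δ f x ≤ (finrank ℝ E : ℝ) * k := by
  have hmax : IsLocalMax
      (fun y ↦ f y - (f x + inner ℝ p (y - x) + k / 2 * ‖y - x‖ ^ 2)) x := by
    filter_upwards [htouch] with y hy
    simpa using hy
  have hquad := hasGradientAt_quadratic x p k (f x)
  constructor
  · rw [gradient_eq_of_isLocalMax_sub (hf.differentiableAt two_ne_zero) hquad.differentiableAt hmax,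
      hquad.gradient]
  · rw [← laplacian_quadratic x p k (f x)]
    exact laplacian_le_of_isLocalMax_sub hf (contDiff_quadratic x p k (f x)).contDiffAt hmax

theorem gradient_eq_and_le_laplacian_of_quadratic_le {p : E} {k : ℝ} (hf : ContDiffAt ℝ 2 f x)
    (htouch : ∀ᶠ y in 𝓝 x, f x + inner ℝ p (y - x) - k / 2 * ‖y - x‖ ^ 2 ≤ f y) :
    gradient f x = p ∧ -((finrank ℝ E : ℝ) * k) ≤ Δ f x := by
  have hmax : IsLocalMax
      (fun y ↦ (f x + inner ℝ p (y - x) + -k / 2 * ‖y - x‖ ^ 2) - f y) x := by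
    filter_upwards [htouch] with y hy
    simp only [sub_self, inner_zero_right, norm_zero]
    linarith
  have hquad := hasGradientAt_quadratic x p (-k) (f x)
  constructor
  · rw [← gradient_eq_of_isLocalMax_sub hquad.differentiableAt (hf.differentiableAt two_ne_zero)
      hmax, hquad.gradient]
  · rw [← mul_neg, ← laplacian_quadratic x p (-k) (f x)]
    exact laplacian_le_of_isLocalMax_sub (contDiff_quadratic x p (-k) (f x)).contDiffAt hf hmax

end Touching

section FiniteFamilies

variable {ι X Y : Type*} [Finite ι] {K : Set X}

theorem exists_forall_le_of_isCompact [Nonempty ι] [TopologicalSpace X] (hK : IsCompact K)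
    (hne : K.Nonempty) {f : ι → X → ℝ} (hf : ∀ i, ContinuousOn (f i) K) :
    ∃ i, ∃ x ∈ K, ∀ j, ∀ y ∈ K, f j y ≤ f i x := by
  choose x hx hmax using fun i ↦ hK.exists_isMaxOn hne (hf i)
  obtain ⟨i, hi⟩ := Finite.exists_max fun i ↦ f i (x i)
  exact ⟨i, x i, hx i, fun j y hy ↦ (hmax j hy).trans (hi j)⟩

theorem eventually_norm_le_of_isCompact [TopologicalSpace X] [SeminormedAddCommGroup Y]
    (hK : IsCompact K) {f : ι → X → Y} (hf : ∀ i, ContinuousOn (f i) K) :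
    ∀ᶠ C in atTop, ∀ i, ∀ x ∈ K, ‖f i x‖ ≤ C := by
  refine eventually_all.2 fun i ↦ ?_
  obtain ⟨C, hC⟩ := hK.exists_bound_of_continuousOn (hf i)
  filter_upwards [eventually_ge_atTop C] with C' hC' x hx using (hC x hx).trans hC'

theorem eventually_dist_lt_of_isCompact [PseudoMetricSpace X] [PseudoMetricSpace Y]
    (hK : IsCompact K) {f : ι → X → Y} (hf : ∀ i, ContinuousOn (f i) K) {τ : ℝ} (hτ : 0 < τ) :
    ∀ᶠ d in 𝓝[>] (0 : ℝ), ∀ i, ∀ x ∈ K, ∀ y ∈ K, dist x y ≤ d → dist (f i x) (f i y) < τ := by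
  refine eventually_all.2 fun i ↦ ?_
  obtain ⟨d, hd, hunif⟩ :=
    uniformContinuousOn_iff.1 (hK.uniformContinuousOn_of_continuous (hf i)) τ hτ
  filter_upwards [Ioo_mem_nhdsGT hd] with d' hd' x hx y hy hxy
  exact hunif x hx y hy (hxy.trans_lt hd'.2)

end FiniteFamilies

section ExteriorPoints

variable {X : Type*} [PseudoMetricSpace X] {K : Set X}

theorem exists_uniform_exterior_point (hK : IsCompact K) (hKc : IsClosed K) {s : ℝ} (hs : 0 < s) :
    ∃ ρ > 0, ∀ x ∈ K, ∀ c ∉ K, dist x c < s →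
      ∃ c', dist x c' < 2 * s ∧ ∀ y ∈ K, ρ ≤ dist y c' := by
  refine hK.induction_on (p := fun A ↦ ∃ ρ > 0, ∀ x ∈ A, ∀ c ∉ K, dist x c < s →
    ∃ c', dist x c' < 2 * s ∧ ∀ y ∈ K, ρ ≤ dist y c') ⟨1, one_pos, by simp⟩ ?_ ?_ ?_
  · rintro A B hAB ⟨ρ, hρ, h⟩
    exact ⟨ρ, hρ, fun x hx ↦ h x (hAB hx)⟩
  · rintro A B ⟨ρ, hρ, h⟩ ⟨ρ', hρ', h'⟩
    refine ⟨min ρ ρ', lt_min hρ hρ', ?_⟩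
    rintro x (hx | hx) c hc hxc
    · obtain ⟨c', hxc', hfar⟩ := h x hx c hc hxc
      exact ⟨c', hxc', fun y hy ↦ (min_le_left _ _).trans (hfar y hy)⟩
    · obtain ⟨c', hxc', hfar⟩ := h' x hx c hc hxc
      exact ⟨c', hxc', fun y hy ↦ (min_le_right _ _).trans (hfar y hy)⟩
  · intro x _
    by_cases hx : ∃ c ∉ K, dist x c < 3 / 2 * s
    · obtain ⟨c, hc, hxc⟩ := hx
      obtain ⟨ρ, hρ, hball⟩ := Metric.isOpen_iff.1 hKc.isOpen_compl c hc
      refine ⟨ball x (s / 2), mem_nhdsWithin_of_mem_nhds (ball_mem_nhds x (by positivity)), ρ, hρ,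
        fun y hy _ _ _ ↦ ⟨c, ?_, fun w hw ↦ ?_⟩⟩
      · linarith [dist_triangle y x c, mem_ball.1 hy]
      · by_contra! hlt
        exact hball hlt hw
    · push Not at hx
      refine ⟨ball x (s / 2), mem_nhdsWithin_of_mem_nhds (ball_mem_nhds x (by positivity)), 1,
        one_pos, fun y hy c hc hyc ↦ ?_⟩
      linarith [hx c hc, dist_triangle x y c, dist_comm x y, mem_ball.1 hy]

end ExteriorPoints

/-- The convex penalties `γ` of the system. The bound `γ' ≤ 1` is encoded as a Lipschitz bound. -/
structure IsPenalty (γ : ℝ → ℝ) : Prop where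
  convexOn : ConvexOn ℝ univ γ
  eq_zero : ∀ s ≤ 0, γ s = 0
  lipschitzWith : LipschitzWith 1 γ
  tendsto_atTop : Tendsto γ atTop atTop

namespace IsPenalty

variable {γ : ℝ → ℝ}

theorem apply_mul_le (hγ : IsPenalty γ) {t : ℝ} (ht0 : 0 ≤ t) (ht1 : t ≤ 1) (s : ℝ) :
    γ (t * s) ≤ t * γ s := by
  simpa [hγ.eq_zero 0 le_rfl] using
    hγ.convexOn.2 (mem_univ s) (mem_univ 0) ht0 (sub_nonneg.2 ht1) (by ring)

theorem nonneg (hγ : IsPenalty γ) (s : ℝ) : 0 ≤ γ s := by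
  rcases le_or_gt s 0 with hs | hs
  · exact (hγ.eq_zero s hs).ge
  · have hmid := hγ.convexOn.2 (mem_univ s) (mem_univ (-s)) (by positivity : (0 : ℝ) ≤ 1 / 2)
      (by positivity : (0 : ℝ) ≤ 1 / 2) (by norm_num)
    rw [smul_neg, add_neg_cancel, hγ.eq_zero 0 le_rfl, hγ.eq_zero (-s) (by linarith)] at hmid
    simpa using hmid

theorem monotone (hγ : IsPenalty γ) : Monotone γ := fun a b hab ↦ by
  rcases le_or_gt a 0 with ha | ha
  · exact (hγ.eq_zero a ha).trans_le (hγ.nonneg b)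
  · have hb : 0 < b := ha.trans_le hab
    calc γ a = γ (a / b * b) := by rw [div_mul_cancel₀ a hb.ne']
      _ ≤ a / b * γ b := hγ.apply_mul_le (by positivity) ((div_le_one hb).2 hab) b
      _ ≤ γ b := mul_le_of_le_one_left (hγ.nonneg b) ((div_le_one hb).2 hab)

theorem div_eq_zero (hγ : IsPenalty γ) {s ε : ℝ} (hs : s ≤ 0) (hε : 0 < ε) : γ (s / ε) = 0 :=
  hγ.eq_zero _ (div_nonpos_of_nonpos_of_nonneg hs hε.le)

end IsPenalty

section ObstacleSystem

variable {E : Type*} [NormedAddCommGroup E] [InnerProductSpace ℝ E]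

/-- The data `U`, `H_j`, `ψ_j`, `γ` of the obstacle system. The two equations are indexed by `Bool`,
so that `!j` is the index `3 - j` of the other equation. -/
structure ObstacleSystem (U : Set E) (H : Bool → E → E → ℝ) (ψ : Bool → E → ℝ) (γ : ℝ → ℝ) :
    Prop where
  isOpen : IsOpen U
  isBounded : Bornology.IsBounded U
  continuousOn_H : ∀ j, ContinuousOn (fun q : E × E ↦ H j q.1 q.2) (closure U ×ˢ univ)
  convexOn_H : ∀ j, ∀ x ∈ closure U, ConvexOn ℝ univ (H j x)
  superlinear_H : ∀ j M, ∃ R, ∀ x ∈ closure U, ∀ p, R ≤ ‖p‖ → M * ‖p‖ ≤ H j x p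
  contDiff_ψ : ∀ j, ContDiff ℝ 2 (ψ j)
  ψ_pos : ∃ α > 0, ∀ j, ∀ x ∈ closure U, α ≤ ψ j x
  isPenalty : IsPenalty γ

variable {U : Set E} {H : Bool → E → E → ℝ} {ψ : Bool → E → ℝ} {γ : ℝ → ℝ}

namespace ObstacleSystem

theorem mem_frontier (D : ObstacleSystem U H ψ γ) {x : E} (hx : x ∈ closure U) (hxU : x ∉ U) :
    x ∈ frontier U :=
  D.isOpen.frontier_eq ▸ ⟨hx, hxU⟩

theorem continuousOn_H_closedBall (D : ObstacleSystem U H ψ γ) (P : ℝ) (j : Bool) :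
    ContinuousOn (fun q : E × E ↦ H j q.1 q.2) (closure U ×ˢ closedBall 0 P) :=
  (D.continuousOn_H j).mono (prod_mono_right (subset_univ _))

theorem eventually_mul_norm_le_H (D : ObstacleSystem U H ψ γ) (M : ℝ) :
    ∀ᶠ R in atTop, ∀ j, ∀ x ∈ closure U, ∀ p, R ≤ ‖p‖ → M * ‖p‖ ≤ H j x p := by
  refine eventually_all.2 fun j ↦ ?_
  obtain ⟨R, hR⟩ := D.superlinear_H j M
  filter_upwards [eventually_ge_atTop R] with R' hR' x hx p hp using hR x hx p (hR'.trans hp)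

variable [FiniteDimensional ℝ E]

theorem isCompact_closure (D : ObstacleSystem U H ψ γ) : IsCompact (closure U) :=
  D.isBounded.isCompact_closure

theorem eventually_abs_H_le (D : ObstacleSystem U H ψ γ) (P : ℝ) :
    ∀ᶠ C in atTop, ∀ j, ∀ x ∈ closure U, ∀ p : E, ‖p‖ ≤ P → |H j x p| ≤ C := by
  filter_upwards [eventually_norm_le_of_isCompact
    (D.isCompact_closure.prod (isCompact_closedBall 0 P)) (D.continuousOn_H_closedBall P)]
    with C hC j x hx p hp
  exact hC j (x, p) ⟨hx, mem_closedBall_zero_iff.2 hp⟩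

theorem eventually_abs_H_sub_lt (D : ObstacleSystem U H ψ γ) (P : ℝ) {τ : ℝ} (hτ : 0 < τ) :
    ∀ᶠ d in 𝓝[>] (0 : ℝ), ∀ j, ∀ x ∈ closure U, ∀ y ∈ closure U, ∀ p q : E, ‖p‖ ≤ P → ‖q‖ ≤ P →
      ‖x - y‖ ≤ d → ‖p - q‖ ≤ d → |H j x p - H j y q| < τ := by
  filter_upwards [eventually_dist_lt_of_isCompact
    (D.isCompact_closure.prod (isCompact_closedBall 0 P)) (D.continuousOn_H_closedBall P) hτ]
    with d hd j x hx y hy p q hp hq hxy hpq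
  refine hd j (x, p) ⟨hx, mem_closedBall_zero_iff.2 hp⟩ (y, q) ⟨hy, mem_closedBall_zero_iff.2 hq⟩ ?_
  rw [Prod.dist_eq, dist_eq_norm, dist_eq_norm]
  exact max_le hxy hpq

end ObstacleSystem

variable [FiniteDimensional ℝ E]

/-- `(u false, u true)` is a classical solution of the penalized system with parameter `ε`. On the
frontier, `gradient (u j)` is the gradient of `u j` as a function on `E`, with the value `0` where
`u j` is not differentiable. -/
structure PenalizedSolution (U : Set E) (H : Bool → E → E → ℝ) (ψ : Bool → E → ℝ) (γ : ℝ → ℝ)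
    (ε : ℝ) (u : Bool → E → ℝ) : Prop where
  contDiffOn : ∀ j, ContDiffOn ℝ 2 (u j) U
  continuousOn : ∀ j, ContinuousOn (u j) (closure U)
  continuousOn_gradient : ∀ j, ContinuousOn (gradient (u j)) (closure U)
  eq_zero : ∀ j, ∀ x ∈ frontier U, u j x = 0
  pde : ∀ j, ∀ x ∈ U, u j x + H j x (gradient (u j) x) + γ ((u j x - u (!j) x - ψ j x) / ε) =
    ε * Δ (u j) x

variable {ε : ℝ} {u : Bool → E → ℝ}

namespace PenalizedSolution

theorem contDiffAt (S : PenalizedSolution U H ψ γ ε u) (hU : IsOpen U) (j : Bool) {x : E}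
    (hx : x ∈ U) : ContDiffAt ℝ 2 (u j) x :=
  (S.contDiffOn j).contDiffAt (hU.mem_nhds hx)

theorem isDirichletOn (S : PenalizedSolution U H ψ γ ε u) (j : Bool) : IsDirichletOn (u j) U where
  differentiableOn := (S.contDiffOn j).differentiableOn two_ne_zero
  continuousOn := S.continuousOn j
  eq_zero := S.eq_zero j

theorem le_of_abs_H_le (D : ObstacleSystem U H ψ γ) (hε : 0 < ε)
    (S : PenalizedSolution U H ψ γ ε u) {C : ℝ} (hC : 0 ≤ C)
    (hH : ∀ j, ∀ x ∈ closure U, |H j x 0| ≤ C) (j : Bool) {x : E} (hx : x ∈ closure U) :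
    u j x ≤ C := by
  obtain ⟨z, hz, hmax⟩ := D.isCompact_closure.exists_isMaxOn ⟨x, hx⟩ (S.continuousOn j)
  refine (hmax hx).trans ?_
  by_cases hzU : z ∈ U
  · obtain ⟨hgrad, hlap⟩ := gradient_eq_and_laplacian_le_of_le_quadratic (p := 0) (k := 0)
      (S.contDiffAt D.isOpen j hzU) (by
        filter_upwards [D.isOpen.mem_nhds hzU] with y hy
        simpa using hmax (subset_closure hy))
    have hpde := S.pde j z hzU
    rw [hgrad] at hpde
    have hlap' : ε * Δ (u j) z ≤ 0 := mul_nonpos_of_nonneg_of_nonpos hε.le (by simpa using hlap)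
    linarith [(abs_le.1 (hH j z hz)).1, D.isPenalty.nonneg ((u j z - u (!j) z - ψ j z) / ε)]
  · exact (S.eq_zero j z (D.mem_frontier hz hzU)).trans_le hC

theorem neg_le_of_abs_H_le (D : ObstacleSystem U H ψ γ) (hε : 0 < ε)
    (S : PenalizedSolution U H ψ γ ε u) {C : ℝ} (hC : 0 ≤ C)
    (hH : ∀ j, ∀ x ∈ closure U, |H j x 0| ≤ C) (j : Bool) {x : E} (hx : x ∈ closure U) :
    -C ≤ u j x := by
  obtain ⟨k, z, hz, hmax⟩ := exists_forall_le_of_isCompact D.isCompact_closure ⟨x, hx⟩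
    fun j ↦ (S.continuousOn j).neg
  simp only [Pi.neg_apply, neg_le_neg_iff] at hmax
  refine le_trans ?_ (hmax j x hx)
  by_cases hzU : z ∈ U
  · obtain ⟨hgrad, hlap⟩ := gradient_eq_and_le_laplacian_of_quadratic_le (p := 0) (k := 0)
      (S.contDiffAt D.isOpen k hzU) (by
        filter_upwards [D.isOpen.mem_nhds hzU] with y hy
        simpa using hmax k y (subset_closure hy))
    obtain ⟨α, hα, hψ⟩ := D.ψ_pos
    have hpde := S.pde k z hzU
    rw [hgrad, D.isPenalty.div_eq_zero (by linarith [hψ k z hz, hmax (!k) z hz]) hε] at hpde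
    have hlap' : 0 ≤ ε * Δ (u k) z := mul_nonneg hε.le (by simpa using hlap)
    linarith [(abs_le.1 (hH k z hz)).2]
  · rw [S.eq_zero k z (D.mem_frontier hz hzU)]
    exact neg_nonpos.2 hC

end PenalizedSolution

theorem ObstacleSystem.eventually_abs_le (D : ObstacleSystem U H ψ γ) :
    ∀ᶠ C in atTop, ∀ ε > 0, ∀ u, PenalizedSolution U H ψ γ ε u →
      ∀ j, ∀ x ∈ closure U, |u j x| ≤ C := by
  filter_upwards [D.eventually_abs_H_le 0, eventually_ge_atTop 0] with C hH hC ε hε u S j x hx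
  have hH0 : ∀ j, ∀ x ∈ closure U, |H j x 0| ≤ C := fun j x hx ↦ hH j x hx 0 (by simp)
  exact abs_le.2 ⟨S.neg_le_of_abs_H_le D hε hC hH0 j hx, S.le_of_abs_H_le D hε hC hH0 j hx⟩

namespace PenalizedSolution

/-- The cone `R‖x - c‖` is a supersolution because `H` exceeds `(n + 1) R` on its gradients, while
its Laplacian is `(n - 1) R / ‖x - c‖`. -/
theorem le_cone (D : ObstacleSystem U H ψ γ) (hε : 0 < ε) (S : PenalizedSolution U H ψ γ ε u)
    {R : ℝ} (hR : 0 < R)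
    (hHR : ∀ j, ∀ x ∈ closure U, ∀ p, R ≤ ‖p‖ → (finrank ℝ E + 1 : ℝ) * ‖p‖ ≤ H j x p)
    {c : E} (hc : ∀ y ∈ closure U, ε ≤ ‖y - c‖) (j : Bool) {x : E} (hx : x ∈ closure U) :
    u j x ≤ R * ‖x - c‖ := by
  obtain ⟨z, hz, hmax⟩ := D.isCompact_closure.exists_isMaxOn ⟨x, hx⟩
    (f := fun x ↦ u j x - R * ‖x - c‖) ((S.continuousOn j).sub (by fun_prop))
  have hle (y : E) (hy : y ∈ closure U) : u j y - R * ‖y - c‖ ≤ u j z - R * ‖z - c‖ := hmax hy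
  suffices u j z ≤ R * ‖z - c‖ by linarith [hle x hx]
  by_cases hzU : z ∉ U
  · rw [S.eq_zero j z (D.mem_frontier hz hzU)]
    positivity
  have ht : 0 < ‖z - c‖ := hε.trans_le (hc z hz)
  obtain ⟨hgrad, hlap⟩ := gradient_eq_and_laplacian_le_of_le_quadratic
    (p := (R * ‖z - c‖⁻¹) • (z - c)) (k := R * ‖z - c‖⁻¹)
    (S.contDiffAt D.isOpen j (not_not.1 hzU)) (by
      filter_upwards [D.isOpen.mem_nhds (not_not.1 hzU)] with y hy
      have hcone := norm_add_le_quadratic (norm_pos_iff.1 ht) (y - z)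
      rw [sub_add_sub_cancel', real_inner_smul_left] at hcone
      rw [real_inner_smul_left]
      linarith [hle y (subset_closure hy), mul_le_mul_of_nonneg_left hcone hR.le])
  have hnorm : ‖gradient (u j) z‖ = R := by
    rw [hgrad, norm_smul, Real.norm_of_nonneg (by positivity), inv_mul_cancel_right₀ ht.ne']
  have hHz := hHR j z hz _ hnorm.ge
  rw [hnorm] at hHz
  have hlap' : ε * Δ (u j) z ≤ finrank ℝ E * R :=
    calc ε * Δ (u j) z ≤ ε * (finrank ℝ E * (R * ‖z - c‖⁻¹)) := by gcongr
      _ = finrank ℝ E * R * (ε / ‖z - c‖) := by ring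
      _ ≤ finrank ℝ E * R := mul_le_of_le_one_right (by positivity) ((div_le_one ht).2 (hc z hz))
  have hcone : 0 ≤ R * ‖z - c‖ := by positivity
  linarith [S.pde j z (not_not.1 hzU), D.isPenalty.nonneg ((u j z - u (!j) z - ψ j z) / ε)]

end PenalizedSolution

theorem ObstacleSystem.eventually_le_near_exterior (D : ObstacleSystem U H ψ γ) {η : ℝ}
    (hη : 0 < η) :
    ∃ d > 0, ∀ᶠ ε in 𝓝[>] 0, ∀ u, PenalizedSolution U H ψ γ ε u →
      ∀ x ∈ closure U, ∀ c ∉ closure U, ‖x - c‖ < d → ∀ j, u j x ≤ η := by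
  obtain ⟨R, hHR, hR⟩ :=
    ((D.eventually_mul_norm_le_H (finrank ℝ E + 1)).and (eventually_gt_atTop 0)).exists
  have hd : 0 < η / (2 * R) := by positivity
  obtain ⟨ρ, hρ, hext⟩ := exists_uniform_exterior_point D.isCompact_closure isClosed_closure hd
  refine ⟨η / (2 * R), hd, ?_⟩
  filter_upwards [Ioo_mem_nhdsGT hρ] with ε hε u S x hx c hc hxc j
  obtain ⟨c', hxc', hfar⟩ := hext x hx c hc (by rwa [dist_eq_norm])
  have hcone := S.le_cone D hε.1 hR hHR
    (fun y hy ↦ hε.2.le.trans (by rw [← dist_eq_norm]; exact hfar y hy)) j hx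
  calc u j x ≤ R * ‖x - c'‖ := hcone
    _ ≤ R * (2 * (η / (2 * R))) := by
      gcongr
      rw [← dist_eq_norm]
      exact hxc'.le
    _ = η := by field_simp

end ObstacleSystem

theorem eventually_mul_le_nhdsGT_zero (a : ℝ) {b : ℝ} (hb : 0 < b) :
    ∀ᶠ r in 𝓝[>] (0 : ℝ), a * r ≤ b := by
  have hlim : Tendsto (fun r : ℝ ↦ a * r) (𝓝[>] 0) (𝓝 (a * 0)) :=
    (continuous_const_mul a).continuousWithinAt
  rw [mul_zero] at hlim
  exact (hlim.eventually_lt_const hb).mono fun r hr ↦ hr.le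

theorem mem_connectedComponentIn_of_mem_closure {X : Type*} [TopologicalSpace X] {F : Set X}
    {x z : X} (hz : z ∈ F) (hx : x ∈ F) (hxz : x ∈ closure (connectedComponentIn F z)) :
    x ∈ connectedComponentIn F z := by
  have hconn : IsPreconnected (insert x (connectedComponentIn F z)) :=
    isPreconnected_connectedComponentIn.subset_closure (subset_insert _ _)
      (insert_subset hxz subset_closure)
  exact hconn.subset_connectedComponentIn (mem_insert_of_mem x (mem_connectedComponentIn hz))
    (insert_subset hx (connectedComponentIn_subset F z)) (mem_insert _ _)

section ParaboloidTouching

variable {E : Type*} [NormedAddCommGroup E] [InnerProductSpace ℝ E]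

theorem paraboloid_sub_expand (q x y z : E) (k : ℝ) :
    inner ℝ q (y - z) - k / 2 * ‖y - z‖ ^ 2 = inner ℝ q (x - z) - k / 2 * ‖x - z‖ ^ 2 +
      (inner ℝ (q - k • (x - z)) (y - x) - k / 2 * ‖y - x‖ ^ 2) := by
  rw [← sub_add_sub_cancel' x z y, norm_add_sq_real, inner_add_right, inner_sub_left q,
    real_inner_smul_left]
  ring

theorem IsDirichletOn.abs_sub_sub_inner_le_of_mem_closure_connectedComponentIn [CompleteSpace E]
    {U : Set E} {f : E → ℝ} {z q x : E} {ω r : ℝ} (hU : IsOpen U) (hf : IsDirichletOn f U)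
    (hω : 0 ≤ ω) (hgrad : ∀ x ∈ U ∩ ball z (8 * r), ‖gradient f x - q‖ ≤ ω)
    (hz : z ∈ U ∩ ball z r) (hx : x ∈ closure (connectedComponentIn (U ∩ ball z r) z)) :
    |f x - f z - inner ℝ q (x - z)| ≤ 20 * ω * r := by
  have hsub : closure (connectedComponentIn (U ∩ ball z r) z) ⊆ closure U :=
    closure_mono fun y hy ↦ (connectedComponentIn_subset _ _ hy).1
  exact le_on_closure (f := fun x ↦ |f x - f z - inner ℝ q (x - z)|) (g := fun _ ↦ 20 * ω * r)
    (fun y hy ↦ hf.abs_sub_sub_inner_le_of_mem_connectedComponentIn hU hω hgrad hz hy)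
    (((hf.continuousOn.mono hsub).sub continuousOn_const).sub (by fun_prop)).abs
    continuousOn_const hx

/-- If a Dirichlet function touches `v` from below at `z`, then a paraboloid of opening `50 ω / r`
touches `v` from below near `z`. The competitor is confined to the connected component of
`U ∩ ball z r`, where the first-order Taylor expansion is available up to the boundary. -/
theorem IsDirichletOn.exists_paraboloid_touch [ProperSpace E] {U : Set E} {f v : E → ℝ} {z q : E}
    {ω r m : ℝ} (hU : IsOpen U) (hf : IsDirichletOn f U) (hω : 0 < ω) (hr : 0 < r)
    (hgrad : ∀ x ∈ U ∩ ball z (8 * r), ‖gradient f x - q‖ ≤ ω) (hz : z ∈ U)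
    (hv : ContinuousOn v (closure U)) (hvz : v z ≤ f z + m)
    (hge : ∀ x ∈ closure U, f x + m ≤ v x)
    (hfrontier : ∀ x ∈ frontier U ∩ closedBall z r, f z + inner ℝ q (x - z) + m < v x) :
    ∃ x ∈ U ∩ ball z r, v x ≤ f z + inner ℝ q (x - z) + m ∧
      f z + inner ℝ q (x - z) ≤ f x + 20 * ω * r ∧
      ∀ᶠ y in 𝓝 x, v x + inner ℝ (q - (50 * ω / r) • (x - z)) (y - x) -
        50 * ω / r / 2 * ‖y - x‖ ^ 2 ≤ v y := by
  set K := 50 * ω / r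
  have hKr : K * r = 50 * ω := div_mul_cancel₀ _ hr.ne'
  set V := connectedComponentIn (U ∩ ball z r) z
  have hzball : z ∈ U ∩ ball z r := ⟨hz, mem_ball_self hr⟩
  have hzV : z ∈ V := mem_connectedComponentIn hzball
  have hVU : closure V ⊆ closure U :=
    closure_mono fun x hx ↦ (connectedComponentIn_subset _ _ hx).1
  have hVball : closure V ⊆ closedBall z r := closure_minimal
    (fun x hx ↦ ball_subset_closedBall (connectedComponentIn_subset _ _ hx).2) isClosed_closedBall
  obtain ⟨x, hx, hmin⟩ := ((isCompact_closedBall z r).of_isClosed_subset isClosed_closure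
    hVball).exists_isMinOn ⟨z, subset_closure hzV⟩
    (f := fun x ↦ v x - (inner ℝ q (x - z) - K / 2 * ‖x - z‖ ^ 2))
    ((hv.mono hVU).sub (by fun_prop))
  replace hmin : ∀ y ∈ closure V, v x - (inner ℝ q (x - z) - K / 2 * ‖x - z‖ ^ 2) ≤
    v y - (inner ℝ q (y - z) - K / 2 * ‖y - z‖ ^ 2) := fun y hy ↦ hmin hy
  have hvx : v x + K / 2 * ‖x - z‖ ^ 2 ≤ f z + inner ℝ q (x - z) + m := by
    have hvz' := hmin z (subset_closure hzV)
    simp only [sub_self, inner_zero_right, norm_zero] at hvz'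
    linarith
  have hxz : ‖x - z‖ ≤ r := mem_closedBall_iff_norm.1 (hVball hx)
  have hquad : 0 ≤ K / 2 * ‖x - z‖ ^ 2 := by positivity
  have hxU : x ∈ U := by
    by_contra hxU
    linarith [hfrontier x ⟨hU.frontier_eq ▸ ⟨hVU hx, hxU⟩, hVball hx⟩]
  have htx := (abs_le.1 (hf.abs_sub_sub_inner_le_of_mem_closure_connectedComponentIn hU hω.le
    hgrad hzball hx)).1
  have hxball : ‖x - z‖ < r := by
    refine hxz.lt_of_ne fun heq ↦ ?_
    have hsq : K / 2 * ‖x - z‖ ^ 2 = 25 * (ω * r) := by rw [heq]; linear_combination r / 2 * hKr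
    linarith [hge x (hVU hx), mul_pos hω hr]
  have hxV : x ∈ V :=
    mem_connectedComponentIn_of_mem_closure hzball ⟨hxU, mem_ball_iff_norm.2 hxball⟩ hx
  have hVopen : IsOpen V := (hU.inter isOpen_ball).connectedComponentIn
  refine ⟨x, ⟨hxU, mem_ball_iff_norm.2 hxball⟩, by linarith, by linarith, ?_⟩
  filter_upwards [hVopen.mem_nhds hxV] with y hy
  linarith [hmin y (subset_closure hy), paraboloid_sub_expand q x y z K]

end ParaboloidTouching

section LowerBound

variable {E : Type*} [NormedAddCommGroup E] [InnerProductSpace ℝ E] [FiniteDimensional ℝ E]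

/-- A pair of Dirichlet functions which satisfies the obstacle constraints and the Hamilton–Jacobi
inequalities of (H5.4) with a uniform margin `c`. -/
structure UniformSubsolution (U : Set E) (H : Bool → E → E → ℝ) (ψ Φ : Bool → E → ℝ) (c : ℝ) :
    Prop where
  pos : 0 < c
  isDirichletOn : ∀ j, IsDirichletOn (Φ j) U
  continuousOn_gradient : ∀ j, ContinuousOn (gradient (Φ j)) (closure U)
  sub_add_le : ∀ j, ∀ x ∈ closure U, Φ j x - Φ (!j) x + c ≤ ψ j x
  add_H_add_le : ∀ j, ∀ x ∈ closure U, Φ j x + H j x (gradient (Φ j) x) + c ≤ 0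

variable {U : Set E} {H : Bool → E → E → ℝ} {ψ Φ : Bool → E → ℝ} {γ : ℝ → ℝ} {c ε : ℝ}
  {u : Bool → E → ℝ}

namespace UniformSubsolution

theorem abs_le_of_notMem (D : ObstacleSystem U H ψ γ) (W : UniformSubsolution U H ψ Φ c) {L : ℝ}
    (hL : ∀ j, ∀ x ∈ closure U, ‖gradient (Φ j) x‖ ≤ L) (j : Bool) {x y : E} (hx : x ∈ U)
    (hy : y ∉ U) : |Φ j x| ≤ L * ‖x - y‖ :=
  (W.isDirichletOn j).abs_le_of_notMem D.isOpen convex_univ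
    (fun a ha ↦ hL j a (subset_closure ha.1)) ⟨hx, mem_univ x⟩ hy (mem_univ y)

theorem inner_gradient_le {L : ℝ} (hL : ∀ j, ∀ x ∈ closure U, ‖gradient (Φ j) x‖ ≤ L) (j : Bool)
    {x : E} (hx : x ∈ closure U) (v : E) : inner ℝ (gradient (Φ j) x) v ≤ L * ‖v‖ :=
  (real_inner_le_norm _ _).trans (mul_le_mul_of_nonneg_right (hL j x hx) (norm_nonneg v))

theorem add_inner_gradient_le_of_notMem (D : ObstacleSystem U H ψ γ)
    (W : UniformSubsolution U H ψ Φ c) {L : ℝ} (hL : ∀ j, ∀ x ∈ closure U, ‖gradient (Φ j) x‖ ≤ L)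
    (j : Bool) {x y : E} (hx : x ∈ U) (hy : y ∉ U) :
    Φ j x + inner ℝ (gradient (Φ j) x) (y - x) ≤ 2 * L * ‖y - x‖ := by
  have hΦ := W.abs_le_of_notMem D hL j hx hy
  rw [norm_sub_rev] at hΦ
  linarith [le_abs_self (Φ j x), inner_gradient_le hL j (subset_closure hx) (y - x)]

theorem sub_le_of_small (D : ObstacleSystem U H ψ γ) (W : UniformSubsolution U H ψ Φ c)
    (hε : 0 < ε) (S : PenalizedSolution U H ψ γ ε u) {L ω r η : ℝ} (hω : 0 < ω) (hr : 0 < r)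
    (hη : 0 < η) (hL : ∀ j, ∀ x ∈ closure U, ‖gradient (Φ j) x‖ ≤ L)
    (hosc : ∀ j, ∀ x ∈ closure U, ∀ y ∈ closure U, ‖x - y‖ ≤ 8 * r →
      ‖gradient (Φ j) x - gradient (Φ j) y‖ ≤ ω)
    (hH : ∀ j, ∀ x ∈ closure U, ∀ z ∈ closure U, ∀ p, ‖x - z‖ ≤ r →
      ‖p - gradient (Φ j) z‖ ≤ 50 * ω → H j x p - H j z (gradient (Φ j) z) < c / 4)
    (hLr : L * r ≤ c / 4) (hLη : 2 * L * r ≤ η) (hωr : 20 * ω * r ≤ c)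
    (hεr : finrank ℝ E * (50 * ω / r) * ε ≤ c / 2) (j : Bool) {x : E} (hx : x ∈ closure U) :
    Φ j x - η ≤ u j x := by
  obtain ⟨k, z, hz, hmax⟩ := exists_forall_le_of_isCompact D.isCompact_closure ⟨x, hx⟩
    fun j ↦ (W.isDirichletOn j).continuousOn.sub (S.continuousOn j)
  simp only [Pi.sub_apply] at hmax
  by_contra! hlt
  set m := u k z - Φ k z
  have hm : m < -η := by linarith [hmax j x hx]
  have hge (j : Bool) (y : E) (hy : y ∈ closure U) : Φ j y + m ≤ u j y := by
    linarith [hmax j y hy]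
  have hzU : z ∈ U := by
    by_contra hzU
    have hzf := D.mem_frontier hz hzU
    linarith [S.eq_zero k z hzf, (W.isDirichletOn k).eq_zero z hzf]
  have hL0 : 0 ≤ L := (norm_nonneg _).trans (hL k z hz)
  obtain ⟨y, ⟨hyU, hyz⟩, hvy, htaylor, htouch⟩ :=
    (W.isDirichletOn k).exists_paraboloid_touch D.isOpen hω hr
      (fun a ha ↦ hosc k a (subset_closure ha.1) z hz (mem_ball_iff_norm.1 ha.2).le) hzU
      (S.continuousOn k) (by linarith) (hge k) (fun a ha ↦ by
        have haz : 2 * L * ‖a - z‖ ≤ 2 * L * r := by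
          gcongr
          exact mem_closedBall_iff_norm.1 ha.2
        rw [S.eq_zero k a ha.1]
        linarith [W.add_inner_gradient_le_of_notMem D hL k hzU (D.isOpen.frontier_eq ▸ ha.1).2])
  rw [mem_ball_iff_norm] at hyz
  obtain ⟨hgrad, hlap⟩ :=
    gradient_eq_and_le_laplacian_of_quadratic_le (S.contDiffAt D.isOpen k hyU) htouch
  have hyc := subset_closure hyU
  have hpde := S.pde k y hyU
  rw [D.isPenalty.div_eq_zero (by linarith [hge (!k) y hyc, W.sub_add_le k y hyc]) hε] at hpde
  have hHy := hH k y hyc z hz (gradient (u k) y) hyz.le (by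
    rw [hgrad, sub_sub_cancel_left, norm_neg, norm_smul, Real.norm_of_nonneg (by positivity),
      div_mul_eq_mul_div, div_le_iff₀ hr]
    gcongr)
  have hLy : L * ‖y - z‖ ≤ L * r := by gcongr
  linarith [W.add_H_add_le k z hz, inner_gradient_le hL k hz (y - z),
    mul_le_mul_of_nonneg_left hlap hε.le]

theorem eventually_sub_le (D : ObstacleSystem U H ψ γ) (W : UniformSubsolution U H ψ Φ c) {η : ℝ}
    (hη : 0 < η) :
    ∀ᶠ ε in 𝓝[>] 0, ∀ u, PenalizedSolution U H ψ γ ε u → ∀ j, ∀ x ∈ closure U,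
      Φ j x - η ≤ u j x := by
  have hc := W.pos
  obtain ⟨L, hL⟩ :=
    (eventually_norm_le_of_isCompact D.isCompact_closure W.continuousOn_gradient).exists
  obtain ⟨d, hH, hd⟩ := ((D.eventually_abs_H_sub_lt (L + 1) (by positivity : 0 < c / 4)).and
    self_mem_nhdsWithin).exists
  obtain ⟨ω, hωd, hω1, hω⟩ := ((eventually_mul_le_nhdsGT_zero 50 hd).and
    ((eventually_mul_le_nhdsGT_zero 50 one_pos).and self_mem_nhdsWithin)).exists
  obtain ⟨s, hosc, hs⟩ := ((eventually_dist_lt_of_isCompact D.isCompact_closure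
    W.continuousOn_gradient hω).and self_mem_nhdsWithin).exists
  obtain ⟨r, hrs, hrd, hLr, hLη, hωr, hr⟩ := ((eventually_mul_le_nhdsGT_zero 8 hs).and
    ((eventually_mul_le_nhdsGT_zero 1 hd).and
    ((eventually_mul_le_nhdsGT_zero L (by positivity : 0 < c / 4)).and
    ((eventually_mul_le_nhdsGT_zero (2 * L) hη).and
    ((eventually_mul_le_nhdsGT_zero (20 * ω) hc).and self_mem_nhdsWithin))))).exists
  filter_upwards [self_mem_nhdsWithin, eventually_mul_le_nhdsGT_zero
    (finrank ℝ E * (50 * ω / r)) (by positivity : 0 < c / 2)] with ε hε hεr u S j x hx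
  simp only [dist_eq_norm] at hosc
  refine W.sub_le_of_small D hε S hω hr hη hL
    (fun j x hx y hy hxy ↦ (hosc j x hx y hy (hxy.trans hrs)).le)
    (fun j x hx z hz p hxz hp ↦ ?_) hLr hLη hωr hεr j hx
  refine (abs_lt.1 (hH j x hx z hz p _ ?_ ((hL j z hz).trans (by linarith)) (by linarith)
    (hp.trans hωd))).2
  linarith [norm_le_norm_add_norm_sub' p (gradient (Φ j) z), hL j z hz]

theorem exists_ball_subset_closure_of_contact (D : ObstacleSystem U H ψ γ)
    (W : UniformSubsolution U H ψ Φ c) :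
    ∃ d > 0, ∀ᶠ ε in 𝓝[>] 0, ∀ u, PenalizedSolution U H ψ γ ε u → ∀ j, ∀ x ∈ closure U,
      ψ j x ≤ u j x - u (!j) x → ball x d ⊆ closure U := by
  obtain ⟨α, hα, hψ⟩ := D.ψ_pos
  obtain ⟨L, hL⟩ :=
    (eventually_norm_le_of_isCompact D.isCompact_closure W.continuousOn_gradient).exists
  obtain ⟨d, hd, hupper⟩ := D.eventually_le_near_exterior (by positivity : 0 < α / 4)
  obtain ⟨d', hLd', hd'd, hd'⟩ := ((eventually_mul_le_nhdsGT_zero L (by positivity : 0 < α / 8)).and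
    ((eventually_mul_le_nhdsGT_zero 1 hd).and self_mem_nhdsWithin)).exists
  refine ⟨d', hd', ?_⟩
  filter_upwards [hupper, W.eventually_sub_le D (by positivity : 0 < α / 8)]
    with ε hupper hlower u S j x hx hcontact c hc
  by_contra hcU
  have hxc : ‖x - c‖ < d' := by rwa [← dist_eq_norm, ← mem_ball']
  have hxU : x ∈ U := by
    by_contra hxU
    have hxf := D.mem_frontier hx hxU
    linarith [S.eq_zero j x hxf, S.eq_zero (!j) x hxf, hψ j x hx]
  have hΦ : |Φ (!j) x| ≤ α / 8 :=
    (W.abs_le_of_notMem D hL (!j) hxU fun h ↦ hcU (subset_closure h)).trans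
      ((mul_le_mul_of_nonneg_left hxc.le ((norm_nonneg _).trans (hL j x hx))).trans hLd')
  linarith [hψ j x hx, hupper u S x hx c hcU (by linarith) j, hlower u S (!j) x hx,
    neg_abs_le (Φ (!j) x)]

end UniformSubsolution

namespace ObstacleSystem

theorem exists_add_H_add_le (D : ObstacleSystem U H ψ γ) (hΦ : ∀ j, IsDirichletOn (Φ j) U)
    (hgrad : ∀ j, ContinuousOn (gradient (Φ j)) (closure U))
    (hsub : ∀ j, ∀ x ∈ closure U, Φ j x + H j x (gradient (Φ j) x) < 0) :
    ∃ c > 0, ∀ j, ∀ x ∈ closure U, Φ j x + H j x (gradient (Φ j) x) + c ≤ 0 := by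
  rcases (closure U).eq_empty_or_nonempty with hempty | hne
  · exact ⟨1, one_pos, fun j x hx ↦ absurd hx (hempty ▸ notMem_empty x)⟩
  have hcont (j : Bool) : ContinuousOn (fun x ↦ Φ j x + H j x (gradient (Φ j) x)) (closure U) :=
    (hΦ j).continuousOn.add ((D.continuousOn_H j).comp (continuousOn_id.prodMk (hgrad j))
      fun x hx ↦ ⟨hx, mem_univ _⟩)
  obtain ⟨k, z, hz, hmax⟩ := exists_forall_le_of_isCompact D.isCompact_closure hne hcont
  exact ⟨_, neg_pos.2 (hsub k z hz), fun j x hx ↦ by linarith [hmax j x hx]⟩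

/-- Shrinking `Φ` makes the obstacle constraints strict because `ψ ≥ α > 0`. -/
theorem exists_uniformSubsolution (D : ObstacleSystem U H ψ γ) (hΦ : ∀ j, IsDirichletOn (Φ j) U)
    (hgrad : ∀ j, ContinuousOn (gradient (Φ j)) (closure U))
    (hobst : ∀ j, ∀ x ∈ closure U, Φ j x - Φ (!j) x ≤ ψ j x)
    (hsub : ∀ j, ∀ x ∈ closure U, Φ j x + H j x (gradient (Φ j) x) < 0) :
    ∃ Ψ c, UniformSubsolution U H ψ Ψ c := by
  obtain ⟨α, hα, hψ⟩ := D.ψ_pos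
  obtain ⟨c, hc, hsub⟩ := D.exists_add_H_add_le hΦ hgrad hsub
  obtain ⟨M, hM⟩ := (D.eventually_abs_H_le 0).exists
  obtain ⟨s, hsM, hs0, hs1⟩ := ((eventually_mul_le_nhdsGT_zero (c + M)
    (by positivity : 0 < c / 2)).and (Ioo_mem_nhdsGT one_pos)).exists
  refine ⟨fun j x ↦ (1 - s) * Φ j x, min (s * α) (c / 2), by positivity,
    fun j ↦ (hΦ j).const_mul (1 - s), fun j ↦ ?_, fun j x hx ↦ ?_, fun j x hx ↦ ?_⟩
  · exact ((hgrad j).const_smul (1 - s)).congr fun x _ ↦ gradient_const_mul _ _ x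
  · linarith [min_le_left (s * α) (c / 2), mul_le_mul_of_nonneg_left (hψ j x hx) hs0.le,
      mul_le_mul_of_nonneg_left (hobst j x hx) (sub_pos.2 hs1).le]
  · have hconv := (D.convexOn_H j x hx).2 (mem_univ (gradient (Φ j) x)) (mem_univ 0)
      (sub_pos.2 hs1).le hs0.le (sub_add_cancel 1 s)
    rw [smul_zero, add_zero, smul_eq_mul, smul_eq_mul] at hconv
    rw [gradient_const_mul]
    linarith [min_le_right (s * α) (c / 2),
      mul_le_mul_of_nonneg_left (hsub j x hx) (sub_pos.2 hs1).le,
      mul_le_mul_of_nonneg_left (abs_le.1 (hM j x hx 0 (by simp))).2 hs0.le]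

end ObstacleSystem

end LowerBound

section Profile

/-- The concave modulus `K t + K A ε (1 - exp (-t / ε))`: it has slope at least `K` everywhere and,
at distances below `ε`, second derivative of order `-K A / ε`. -/
noncomputable def profile (K A ε t : ℝ) : ℝ := K * t + K * A * ε * (1 - Real.exp (-t / ε))

/-- The derivative of `profile K A ε`. -/
noncomputable def profileDeriv (K A ε t : ℝ) : ℝ := K * (1 + A * Real.exp (-t / ε))

variable {K A ε t : ℝ}

theorem contDiff_profile : ContDiff ℝ 2 (profile K A ε) := by
  unfold profile
  fun_prop

theorem hasDerivAt_exp_neg_div (ε t : ℝ) :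
    HasDerivAt (fun s ↦ Real.exp (-s / ε)) (-Real.exp (-t / ε) / ε) t :=
  ((hasDerivAt_id t).neg.div_const ε).exp.congr_deriv (by simp only [Pi.neg_apply, id]; ring)

theorem hasDerivAt_profile (hε : 0 < ε) (t : ℝ) :
    HasDerivAt (profile K A ε) (profileDeriv K A ε t) t := by
  refine (((hasDerivAt_id t).const_mul K).add
    (((hasDerivAt_exp_neg_div ε t).const_sub 1).const_mul (K * A * ε))).congr_deriv ?_
  unfold profileDeriv
  field_simp

theorem hasDerivAt_profileDeriv (t : ℝ) :
    HasDerivAt (profileDeriv K A ε) (-(K * A / ε) * Real.exp (-t / ε)) t :=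
  ((((hasDerivAt_exp_neg_div ε t).const_mul A).const_add 1).const_mul K).congr_deriv (by ring)

theorem exp_neg_div_le_one (hε : 0 < ε) (ht : 0 ≤ t) : Real.exp (-t / ε) ≤ 1 :=
  Real.exp_le_one_iff.2 (div_nonpos_of_nonpos_of_nonneg (neg_nonpos.2 ht) hε.le)

theorem profile_le_tangent (hK : 0 ≤ K) (hA : 0 ≤ A) (hε : 0 < ε) (s t : ℝ) :
    profile K A ε s ≤ profile K A ε t + profileDeriv K A ε t * (s - t) := by
  have hexp : Real.exp (-t / ε) * (-(s - t) / ε + 1) ≤ Real.exp (-s / ε) := by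
    rw [show -s / ε = -t / ε + -(s - t) / ε by ring, Real.exp_add]
    gcongr
    exact Real.add_one_le_exp _
  have hscaled := mul_le_mul_of_nonneg_left hexp (show 0 ≤ K * A * ε by positivity)
  have hcancel : K * A * ε * (Real.exp (-t / ε) * (-(s - t) / ε + 1)) =
      K * A * Real.exp (-t / ε) * (ε - (s - t)) := by
    field_simp
    ring
  unfold profile profileDeriv
  linarith

theorem mul_le_profile (hK : 0 ≤ K) (hA : 0 ≤ A) (hε : 0 < ε) (ht : 0 ≤ t) :
    K * t ≤ profile K A ε t :=
  le_add_of_nonneg_right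
    (mul_nonneg (by positivity) (sub_nonneg.2 (exp_neg_div_le_one hε ht)))

theorem profile_le_mul (hK : 0 ≤ K) (hA : 0 ≤ A) (hε : 0 < ε) (t : ℝ) :
    profile K A ε t ≤ K * (1 + A) * t := by
  simpa [profile, profileDeriv] using profile_le_tangent hK hA hε t 0

theorem profile_le_add (hK : 0 ≤ K) (hA : 0 ≤ A) (hε : 0 ≤ ε) (t : ℝ) :
    profile K A ε t ≤ K * t + K * A * ε := by
  refine add_le_add_right (mul_le_of_le_one_right (by positivity) ?_) _
  linarith [Real.exp_pos (-t / ε)]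

theorem le_profileDeriv (hK : 0 ≤ K) (hA : 0 ≤ A) : K ≤ profileDeriv K A ε t :=
  le_mul_of_one_le_right hK (le_add_of_nonneg_right (by positivity))

theorem profileDeriv_le (hK : 0 ≤ K) (hA : 0 ≤ A) (hε : 0 < ε) (ht : 0 ≤ t) :
    profileDeriv K A ε t ≤ K * (1 + A) := by
  unfold profileDeriv
  gcongr
  exact mul_le_of_le_one_right hA (exp_neg_div_le_one hε ht)

end Profile

section AbsPerturbation

variable {E : Type*} [NormedAddCommGroup E] [InnerProductSpace ℝ E] [CompleteSpace E]
  {f : E → ℝ} {x p : E} {c₀ δ k : ℝ}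

theorem smul_gradient_eq_of_mul_le_quadratic {c m : ℝ} (hf : DifferentiableAt ℝ f x)
    (hm : c * f x = m)
    (htouch : ∀ᶠ y in 𝓝 x, c * f y ≤ m + inner ℝ p (y - x) + k / 2 * ‖y - x‖ ^ 2) :
    c • gradient f x = p := by
  have hquad := hasGradientAt_quadratic x p k m
  rw [← gradient_const_mul, ← hquad.gradient]
  refine gradient_eq_of_isLocalMax_sub (hf.const_mul c) hquad.differentiableAt ?_
  filter_upwards [htouch] with y hy
  simp only [sub_self, inner_zero_right, norm_zero]
  linarith

/-- Were `f x = 0`, both `(c₀ + δ) • gradient f x` and `(c₀ - δ) • gradient f x` would equal `p`. -/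
theorem exists_coeff_of_add_abs_le_quadratic (hδ : 0 < δ) (hf : DifferentiableAt ℝ f x)
    (hp : p ≠ 0) (htouch : ∀ᶠ y in 𝓝 x, c₀ * f y + δ * |f y| ≤
      c₀ * f x + δ * |f x| + inner ℝ p (y - x) + k / 2 * ‖y - x‖ ^ 2) :
    f x ≠ 0 ∧ ∃ c, |c - c₀| ≤ δ ∧ c * f x = c₀ * f x + δ * |f x| ∧
      ∀ y, c * f y ≤ c₀ * f y + δ * |f y| := by
  have hplus : ∀ y, (c₀ + δ) * f y ≤ c₀ * f y + δ * |f y| := fun y ↦ by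
    linarith [mul_le_mul_of_nonneg_left (le_abs_self (f y)) hδ.le]
  have hminus : ∀ y, (c₀ - δ) * f y ≤ c₀ * f y + δ * |f y| := fun y ↦ by
    linarith [mul_le_mul_of_nonneg_left (neg_abs_le (f y)) hδ.le]
  rcases lt_trichotomy (f x) 0 with hneg | hzero | hpos
  · exact ⟨hneg.ne, c₀ - δ, by simp [abs_of_pos hδ], by rw [abs_of_neg hneg]; ring, hminus⟩
  · have hgradPlus : (c₀ + δ) • gradient f x = p :=
      smul_gradient_eq_of_mul_le_quadratic hf (by simp [hzero])
        (htouch.mono fun y hy ↦ (hplus y).trans hy)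
    have hgradMinus : (c₀ - δ) • gradient f x = p :=
      smul_gradient_eq_of_mul_le_quadratic hf (by simp [hzero])
        (htouch.mono fun y hy ↦ (hminus y).trans hy)
    have hcoeff : c₀ + δ ≠ c₀ - δ := by linarith
    have hgrad : gradient f x = 0 := by
      by_contra hne
      exact hcoeff (smul_left_injective ℝ hne (hgradPlus.trans hgradMinus.symm))
    exact absurd (by rw [← hgradPlus, hgrad, smul_zero]) hp
  · exact ⟨hpos.ne', c₀ + δ, by simp [abs_of_pos hδ], by rw [abs_of_pos hpos]; ring, hplus⟩

end AbsPerturbation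

section DoublingCost

variable {E : Type*} [NormedAddCommGroup E] [InnerProductSpace ℝ E]

/-- The penalization `φ ‖x - y‖ + b ‖x - a‖²` of the doubled variables, localized near `a`. -/
def doublingCost (φ : ℝ → ℝ) (a : E) (b : ℝ) (x y : E) : ℝ := φ ‖x - y‖ + b * ‖x - a‖ ^ 2

variable {φ : ℝ → ℝ} {a x y : E} {b d : ℝ}

theorem apply_norm_add_le_quadratic {z : E} (hφ : ∀ s, φ s ≤ φ ‖z‖ + d * (s - ‖z‖)) (hd : 0 ≤ d)
    (hz : z ≠ 0) (h : E) :
    φ ‖z + h‖ ≤ φ ‖z‖ + inner ℝ ((d * ‖z‖⁻¹) • z) h + d * ‖z‖⁻¹ / 2 * ‖h‖ ^ 2 := by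
  have hnorm := mul_le_mul_of_nonneg_left (norm_add_le_quadratic hz h) hd
  rw [mul_smul, real_inner_smul_left]
  linarith [hφ ‖z + h‖]

theorem doublingCost_le_left (hφ : ∀ s, φ s ≤ φ ‖x - y‖ + d * (s - ‖x - y‖)) (hd : 0 ≤ d)
    (hxy : x ≠ y) (x' : E) :
    doublingCost φ a b x' y ≤ doublingCost φ a b x y +
      inner ℝ ((d * ‖x - y‖⁻¹) • (x - y) + (2 * b) • (x - a)) (x' - x) +
      (d * ‖x - y‖⁻¹ + 2 * b) / 2 * ‖x' - x‖ ^ 2 := by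
  have hφx := apply_norm_add_le_quadratic hφ hd (sub_ne_zero.2 hxy) (x' - x)
  have hsq := norm_add_sq_real (x - a) (x' - x)
  rw [show x - y + (x' - x) = x' - y by abel] at hφx
  rw [show x - a + (x' - x) = x' - a by abel] at hsq
  rw [doublingCost, doublingCost, inner_add_left, real_inner_smul_left (x - a), hsq]
  linarith

theorem doublingCost_le_right (hφ : ∀ s, φ s ≤ φ ‖x - y‖ + d * (s - ‖x - y‖)) (hd : 0 ≤ d)
    (hxy : x ≠ y) (y' : E) :
    doublingCost φ a b x y' ≤ doublingCost φ a b x y +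
      inner ℝ (-((d * ‖x - y‖⁻¹) • (x - y))) (y' - y) +
      d * ‖x - y‖⁻¹ / 2 * ‖y' - y‖ ^ 2 := by
  have hφy := apply_norm_add_le_quadratic hφ hd (sub_ne_zero.2 hxy) (y - y')
  rw [show x - y + (y - y') = x - y' by abel, norm_sub_rev y y', ← neg_sub y' y, inner_neg_right,
    ← inner_neg_left] at hφy
  rw [doublingCost, doublingCost]
  linarith

/-- The increments `h` and `R h` differ by twice the component of `h` along `x - y`, so the cost
sees only the profile `φ` along that direction. -/
theorem doublingCost_add_reflection {h : E} (hxy : x ≠ y)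
    (hh : 0 ≤ ‖x - y‖ + inner ℝ ((2 * ‖x - y‖⁻¹) • (x - y)) h) :
    doublingCost φ a b (x + h) (y + (ℝ ∙ (x - y))ᗮ.reflection h) =
      φ (‖x - y‖ + inner ℝ ((2 * ‖x - y‖⁻¹) • (x - y)) h) + b * ‖x + h - a‖ ^ 2 := by
  have hpos : 0 < ‖x - y‖ := norm_pos_iff.2 (sub_ne_zero.2 hxy)
  have hdiff : x + h - (y + (ℝ ∙ (x - y))ᗮ.reflection h) =
      ((‖x - y‖ + inner ℝ ((2 * ‖x - y‖⁻¹) • (x - y)) h) * ‖x - y‖⁻¹) • (x - y) := by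
    rw [Submodule.reflection_orthogonal_apply, Submodule.reflection_singleton_apply,
      real_inner_smul_left, add_mul, mul_inv_cancel₀ hpos.ne', add_smul, one_smul]
    simp only [RCLike.ofReal_real_eq_id, id]
    module
  rw [doublingCost, hdiff, norm_smul, Real.norm_of_nonneg (mul_nonneg hh (by positivity)),
    inv_mul_cancel_right₀ hpos.ne']

end DoublingCost

section DoubledMaximum

variable {E : Type*} [NormedAddCommGroup E] [InnerProductSpace ℝ E] [FiniteDimensional ℝ E]
  {f g : E → ℝ} {φ φ' : ℝ → ℝ} {a x y : E} {b d : ℝ}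

theorem laplacian_const_mul (c : ℝ) (hf : ContDiffAt ℝ 2 f x) :
    Δ (fun y ↦ c * f y) x = c * Δ f x :=
  laplacian_smul c hf

theorem gradient_eq_and_laplacian_le_of_isLocalMax_doubled_left (hf : ContDiffAt ℝ 2 f x)
    (hφ : ∀ s, φ s ≤ φ ‖x - y‖ + d * (s - ‖x - y‖)) (hd : 0 ≤ d) (hxy : x ≠ y)
    (hmax : IsLocalMax (fun q : E × E ↦ f q.1 - g q.2 - doublingCost φ a b q.1 q.2) (x, y)) :
    gradient f x = (d * ‖x - y‖⁻¹) • (x - y) + (2 * b) • (x - a) ∧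
      Δ f x ≤ (finrank ℝ E : ℝ) * (d * ‖x - y‖⁻¹ + 2 * b) := by
  refine gradient_eq_and_laplacian_le_of_le_quadratic hf ?_
  have hmaxLeft : IsLocalMax (fun x' ↦ f x' - g y - doublingCost φ a b x' y) x :=
    hmax.comp_continuous (g := fun x' ↦ (x', y)) (by fun_prop)
  filter_upwards [hmaxLeft] with x' hx'
  linarith [doublingCost_le_left (a := a) (b := b) hφ hd hxy x']

theorem gradient_eq_of_isLocalMax_doubled_right (hg : ContDiffAt ℝ 2 g y)
    (hφ : ∀ s, φ s ≤ φ ‖x - y‖ + d * (s - ‖x - y‖)) (hd : 0 ≤ d) (hxy : x ≠ y)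
    (hmax : IsLocalMax (fun q : E × E ↦ f q.1 - g q.2 - doublingCost φ a b q.1 q.2) (x, y)) :
    gradient g y = (d * ‖x - y‖⁻¹) • (x - y) := by
  refine (gradient_eq_and_le_laplacian_of_quadratic_le (k := d * ‖x - y‖⁻¹) hg ?_).1
  have hmaxRight : IsLocalMax (fun y' ↦ f x - g y' - doublingCost φ a b x y') y :=
    hmax.comp_continuous (g := fun y' ↦ (x, y')) (by fun_prop)
  filter_upwards [hmaxRight] with y' hy'
  have hcost := doublingCost_le_right (a := a) (b := b) hφ hd hxy y'
  rw [inner_neg_left] at hcost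
  linarith

theorem laplacian_reflected_cost (hφ : ContDiff ℝ 2 φ) (hφ' : ∀ s, HasDerivAt φ (φ' s) s)
    {m : ℝ} (hm : HasDerivAt φ' m ‖x - y‖) (hxy : x ≠ y) :
    Δ (fun h ↦ φ (‖x - y‖ + inner ℝ ((2 * ‖x - y‖⁻¹) • (x - y)) h) + b * ‖x + h - a‖ ^ 2) 0 =
      4 * m + 2 * b * (finrank ℝ E : ℝ) := by
  have hw : ‖(2 * ‖x - y‖⁻¹) • (x - y)‖ = 2 := by
    rw [norm_smul, Real.norm_of_nonneg (by positivity), mul_assoc,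
      inv_mul_cancel₀ (norm_ne_zero_iff.2 (sub_ne_zero.2 hxy)), mul_one]
  have hshift : ContDiff ℝ 2 fun s ↦ φ (‖x - y‖ + s) := hφ.comp (by fun_prop)
  have hprofile : Δ (fun h ↦ φ (‖x - y‖ + inner ℝ ((2 * ‖x - y‖⁻¹) • (x - y)) h)) 0 = 4 * m := by
    rw [laplacian_comp_inner (φ := fun s ↦ φ (‖x - y‖ + s)) (φ' := fun s ↦ φ' (‖x - y‖ + s)) _ _
      hshift.contDiffAt (fun s ↦ (hφ' (‖x - y‖ + s)).comp_const_add _ _)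
      (m := m) (HasDerivAt.comp_const_add _ _ (by simpa using hm)), hw]
    ring
  have hsq : Δ (fun h : E ↦ ‖x + h - a‖ ^ 2) 0 = 2 * (finrank ℝ E : ℝ) := by
    simpa only [sub_sub_eq_add_sub, add_comm] using laplacian_norm_sub_sq (a - x) (0 : E)
  have hcontProfile : ContDiffAt ℝ 2
      (fun h ↦ φ (‖x - y‖ + inner ℝ ((2 * ‖x - y‖⁻¹) • (x - y)) h)) 0 :=
    (hshift.comp (contDiff_const.inner ℝ contDiff_id)).contDiffAt
  have hcontSq : ContDiffAt ℝ 2 (fun h : E ↦ ‖x + h - a‖ ^ 2) 0 :=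
    (((contDiff_const.add contDiff_id).sub contDiff_const).norm_sq ℝ).contDiffAt
  have hadd := hcontProfile.laplacian_add ((contDiffAt_const (c := b)).mul hcontSq)
  rw [laplacian_const_mul b hcontSq, hprofile, hsq] at hadd
  exact hadd.trans (by ring)

/-- Moving `x` and `y` by `h` and by its reflection across the hyperplane orthogonal to `x - y`
picks up four times the second derivative of `φ` and nothing from the other directions. -/
theorem laplacian_sub_laplacian_le_of_isLocalMax_doubled (hf : ContDiffAt ℝ 2 f x)
    (hg : ContDiffAt ℝ 2 g y) (hφ : ContDiff ℝ 2 φ) (hφ' : ∀ s, HasDerivAt φ (φ' s) s)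
    {m : ℝ} (hm : HasDerivAt φ' m ‖x - y‖) (hxy : x ≠ y)
    (hmax : IsLocalMax (fun q : E × E ↦ f q.1 - g q.2 - doublingCost φ a b q.1 q.2) (x, y)) :
    Δ f x - Δ g y ≤ 4 * m + 2 * b * (finrank ℝ E : ℝ) := by
  set R := (ℝ ∙ (x - y))ᗮ.reflection
  set w := (2 * ‖x - y‖⁻¹) • (x - y)
  have hcontf : ContDiffAt ℝ 2 (fun h ↦ f (x + h)) 0 :=
    ContDiffAt.comp 0 (by simpa using hf) (by fun_prop)
  have hcontg : ContDiffAt ℝ 2 (fun h ↦ g (y + R h)) 0 :=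
    ContDiffAt.comp 0 (by simpa using hg) (contDiffAt_const.add R.contDiff.contDiffAt)
  have hcontCost : ContDiffAt ℝ 2
      (fun h ↦ φ (‖x - y‖ + inner ℝ w h) + b * ‖x + h - a‖ ^ 2) 0 :=
    ((hφ.comp (contDiff_const.add (contDiff_const.inner ℝ contDiff_id))).add
      (contDiff_const.mul
        (((contDiff_const.add contDiff_id).sub contDiff_const).norm_sq ℝ))).contDiffAt
  have hlocal : IsLocalMax (fun h ↦ (f (x + h) - g (y + R h)) -
      (φ (‖x - y‖ + inner ℝ w h) + b * ‖x + h - a‖ ^ 2)) 0 := by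
    have hpull : IsLocalMax (fun h ↦ f (x + h) - g (y + R h) -
        doublingCost φ a b (x + h) (y + R h)) 0 :=
      IsLocalMax.comp_continuous (b := (0 : E)) (g := fun h ↦ (x + h, y + R h))
        (f := fun q : E × E ↦ f q.1 - g q.2 - doublingCost φ a b q.1 q.2)
        (by simpa using hmax) (by fun_prop)
    have hnonneg : ∀ᶠ h in 𝓝 (0 : E), 0 ≤ ‖x - y‖ + inner ℝ w h :=
      (continuousAt_const.eventually_lt (g := fun h ↦ ‖x - y‖ + inner ℝ w h) (by fun_prop)
        (by simpa [sub_eq_zero] using hxy)).mono fun _ ↦ le_of_lt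
    filter_upwards [hpull, hnonneg] with h hle hh
    rwa [doublingCost_add_reflection hxy hh,
      doublingCost_add_reflection hxy (by simp)] at hle
  have hle := laplacian_le_of_isLocalMax_sub (hcontf.sub hcontg) hcontCost hlocal
  have hsub := hcontf.laplacian_sub hcontg
  rw [laplacian_reflected_cost hφ hφ' hm hxy] at hle
  have hlapf : Δ (fun h ↦ f (x + h)) 0 = Δ f x :=
    laplacian_comp_add_linearIsometryEquiv hf (.refl ℝ E)
  rw [hlapf, laplacian_comp_add_linearIsometryEquiv hg R] at hsub
  exact hsub.symm.trans_le hle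

end DoubledMaximum

section DoublingFunctional

variable {E : Type*} [NormedAddCommGroup E]

/-- The pairs `(x, y)` over which the doubled functional is maximized. -/
def doublingDomain (a : E) (ρ : ℝ) : Set (E × E) := {q | ‖q.1 - a‖ ≤ ρ ∧ ‖q.1 - q.2‖ ≤ ρ}

variable {a x y : E} {ρ : ℝ} {q : E × E}

theorem mem_ball_of_mem_doublingDomain (hρ : 0 < ρ) (hq : q ∈ doublingDomain a ρ) :
    q.1 ∈ ball a (3 * ρ) ∧ q.2 ∈ ball a (3 * ρ) := by
  have htri : ‖q.2 - a‖ ≤ ‖q.1 - a‖ + ‖q.1 - q.2‖ := by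
    simpa only [sub_sub_sub_cancel_left] using norm_sub_le (q.1 - a) (q.1 - q.2)
  rw [mem_ball_iff_norm, mem_ball_iff_norm]
  constructor <;> linarith [hq.1, hq.2]

theorem doublingDomain_mem_nhds (hxa : ‖x - a‖ < ρ) (hxy : ‖x - y‖ < ρ) :
    doublingDomain a ρ ∈ 𝓝 (x, y) := by
  have hfst : ∀ᶠ q : E × E in 𝓝 (x, y), ‖q.1 - a‖ < ρ :=
    ContinuousAt.eventually_lt (by fun_prop) continuousAt_const hxa
  have hdiff : ∀ᶠ q : E × E in 𝓝 (x, y), ‖q.1 - q.2‖ < ρ :=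
    ContinuousAt.eventually_lt (by fun_prop) continuousAt_const hxy
  filter_upwards [hfst, hdiff] with q h₁ h₂ using ⟨h₁.le, h₂.le⟩

/-- The doubled functional of `f`. The factor `1 + κ` makes convex nonlinearities comparable at the
two points; the terms `δ |f|` keep both points of a maximum off the zero set of `f`. -/
def doublingFunctional (f : E → ℝ) (φ : ℝ → ℝ) (a : E) (b κ δ : ℝ) (q : E × E) : ℝ :=
  f q.1 + δ * |f q.1| + (δ * |f q.2| - (1 + κ) * f q.2) - doublingCost φ a b q.1 q.2

variable {f : E → ℝ} {φ : ℝ → ℝ} {b d κ δ : ℝ}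

theorem continuousOn_doublingFunctional {V : Set E} (hf : ContinuousOn f V) (hφ : Continuous φ)
    (hρ : 0 < ρ) (hV : ball a (3 * ρ) ⊆ V) :
    ContinuousOn (doublingFunctional f φ a b κ δ) (doublingDomain a ρ) := by
  have hfst : ContinuousOn (fun q : E × E ↦ f q.1) (doublingDomain a ρ) :=
    hf.comp continuousOn_fst fun q hq ↦ hV (mem_ball_of_mem_doublingDomain hρ hq).1
  have hsnd : ContinuousOn (fun q : E × E ↦ f q.2) (doublingDomain a ρ) :=
    hf.comp continuousOn_snd fun q hq ↦ hV (mem_ball_of_mem_doublingDomain hρ hq).2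
  have hcost : Continuous fun q : E × E ↦ doublingCost φ a b q.1 q.2 := by
    unfold doublingCost
    fun_prop
  exact ((hfst.add (continuousOn_const.mul hfst.abs)).add
    ((continuousOn_const.mul hsnd.abs).sub (continuousOn_const.mul hsnd))).sub hcost.continuousOn

variable [InnerProductSpace ℝ E]

theorem isCompact_doublingDomain [FiniteDimensional ℝ E] (a : E) (hρ : 0 < ρ) :
    IsCompact (doublingDomain a ρ) := by
  refine ((isCompact_closedBall a (3 * ρ)).prod (isCompact_closedBall a (3 * ρ))).of_isClosed_subset
    (.inter (isClosed_le (f := fun q : E × E ↦ ‖q.1 - a‖) (by fun_prop) continuous_const)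
      (isClosed_le (f := fun q : E × E ↦ ‖q.1 - q.2‖) (by fun_prop) continuous_const))
    fun q hq ↦ ?_
  have hball := mem_ball_of_mem_doublingDomain hρ hq
  exact ⟨ball_subset_closedBall hball.1, ball_subset_closedBall hball.2⟩

theorem norm_mul_inv_smul_sub (hd : 0 ≤ d) (hxy : x ≠ y) :
    ‖(d * ‖x - y‖⁻¹) • (x - y)‖ = d := by
  rw [norm_smul, Real.norm_of_nonneg (by positivity),
    inv_mul_cancel_right₀ (norm_ne_zero_iff.2 (sub_ne_zero.2 hxy))]

theorem exists_coeffs_of_isLocalMax_doublingFunctional [CompleteSpace E] (hδ : 0 < δ)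
    (hfx : DifferentiableAt ℝ f x) (hfy : DifferentiableAt ℝ f y)
    (hφ : ∀ s, φ s ≤ φ ‖x - y‖ + d * (s - ‖x - y‖)) (hxy : x ≠ y)
    (hd : ‖(2 * b) • (x - a)‖ < d)
    (hmax : IsLocalMax (doublingFunctional f φ a b κ δ) (x, y)) :
    f x ≠ 0 ∧ f y ≠ 0 ∧ ∃ cX cY, |cX - 1| ≤ δ ∧ |cY - (1 + κ)| ≤ δ ∧
      cX * f x - cY * f y = f x + δ * |f x| + (δ * |f y| - (1 + κ) * f y) ∧
      IsLocalMax (fun q : E × E ↦ cX * f q.1 - cY * f q.2 - doublingCost φ a b q.1 q.2) (x, y) := by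
  have hd₀ : 0 < d := (norm_nonneg _).trans_lt hd
  have hpnorm := norm_mul_inv_smul_sub hd₀.le hxy
  have hp : -((d * ‖x - y‖⁻¹) • (x - y)) ≠ 0 := by
    rw [← norm_ne_zero_iff, norm_neg, hpnorm]
    exact hd₀.ne'
  have hpr : (d * ‖x - y‖⁻¹) • (x - y) + (2 * b) • (x - a) ≠ 0 := fun hzero ↦ by
    rw [add_eq_zero_iff_eq_neg] at hzero
    rw [hzero, norm_neg] at hpnorm
    exact hd.ne hpnorm
  have hmaxLeft : IsLocalMax (fun x' ↦ doublingFunctional f φ a b κ δ (x', y)) x :=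
    hmax.comp_continuous (g := fun x' ↦ (x', y)) (by fun_prop)
  have hmaxRight : IsLocalMax (fun y' ↦ doublingFunctional f φ a b κ δ (x, y')) y :=
    hmax.comp_continuous (g := fun y' ↦ (x, y')) (by fun_prop)
  simp only [doublingFunctional] at hmaxLeft hmaxRight
  obtain ⟨hfx₀, cX, hcX, hcXx, hcXle⟩ := exists_coeff_of_add_abs_le_quadratic (c₀ := 1)
    (k := d * ‖x - y‖⁻¹ + 2 * b) hδ hfx hpr (by
      filter_upwards [hmaxLeft] with x' hx'
      linarith [doublingCost_le_left (a := a) (b := b) hφ hd₀.le hxy x'])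
  obtain ⟨hfy₀, cY, hcY, hcYy, hcYle⟩ := exists_coeff_of_add_abs_le_quadratic
    (c₀ := -(1 + κ)) (k := d * ‖x - y‖⁻¹) hδ hfy hp (by
      filter_upwards [hmaxRight] with y' hy'
      linarith [doublingCost_le_right (a := a) (b := b) hφ hd₀.le hxy y'])
  refine ⟨hfx₀, hfy₀, cX, -cY, hcX, ?_, by linarith, ?_⟩
  · rwa [← abs_neg, show -(-cY - (1 + κ)) = cY - -(1 + κ) by ring]
  · filter_upwards [hmax] with q hq
    simp only [doublingFunctional] at hq
    linarith [hcXle q.1, hcYle q.2]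

end DoublingFunctional

section Doubling

variable {E : Type*} [NormedAddCommGroup E] [InnerProductSpace ℝ E]

/-- The slope `K` is so large that, at the scale `ρ` and with localization `b ‖x - a‖²`, the growth
of `H` beats the other terms of the equations at every point where the gradient has norm about `K`.
Here `C` bounds the solutions and `L` is a Lipschitz constant of the obstacles. -/
structure DominatingSlope (U : Set E) (H : Bool → E → E → ℝ) (ψ : Bool → E → ℝ) (C : ℝ) (L : NNReal)
    (ρ b K : ℝ) : Prop where
  C_pos : 0 < C
  ρ_pos : 0 < ρ
  b_nonneg : 0 ≤ b
  localization_le : 8 * b * ρ ≤ K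
  oscillation_le : 2 * C ≤ K * ρ
  lt_slope : C + 2 * b < K
  superlinear : ∀ j, ∀ x ∈ closure U, ∀ p, K / 4 ≤ ‖p‖ → 8 * (finrank ℝ E + 1 : ℝ) * ‖p‖ ≤ H j x p
  lipschitzOnWith_ψ : ∀ j, LipschitzOnWith L (ψ j) (closure U)

theorem DominatingSlope.slope_pos {U : Set E} {H : Bool → E → E → ℝ} {ψ : Bool → E → ℝ} {C : ℝ}
    {L : NNReal} {ρ b K : ℝ} (hK : DominatingSlope U H ψ C L ρ b K) : 0 < K := by
  linarith [hK.C_pos, hK.b_nonneg, hK.lt_slope]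

theorem DominatingSlope.mono {U : Set E} {H : Bool → E → E → ℝ} {ψ : Bool → E → ℝ} {C : ℝ}
    {L : NNReal} {ρ b b' K : ℝ} (hK : DominatingSlope U H ψ C L ρ b K) (hb' : 0 ≤ b')
    (hbb' : b' ≤ b) : DominatingSlope U H ψ C L ρ b' K :=
  { hK with
    b_nonneg := hb'
    localization_le := by
      have hρ := hK.ρ_pos
      exact le_trans (by gcongr) hK.localization_le
    lt_slope := by linarith [hK.lt_slope] }

/-- The loss `C₁` in comparing the Hamiltonian terms at two points at distance at most `ε`, when the
gradients there are `p + r` and `p` up to factors close to `1` and `1 + κ`. -/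
def HamiltonianDefectLE (U : Set E) (H : Bool → E → E → ℝ) (ε κ δ P r₀ C₁ : ℝ) : Prop :=
  ∀ j, ∀ x ∈ closure U, ∀ y ∈ closure U, ‖x - y‖ ≤ ε → ∀ cX cY, |cX - 1| ≤ δ → |cY - (1 + κ)| ≤ δ →
    ∀ p r, ‖p‖ ≤ P → ‖r‖ ≤ r₀ → -C₁ ≤ cX * H j x (cX⁻¹ • (p + r)) - cY * H j y (cY⁻¹ • p)

theorem doubling_coeff_bounds {κ δ cX cY : ℝ} (hκ : κ ≤ 1) (hδ : δ ≤ κ / 4) (hX : |cX - 1| ≤ δ)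
    (hY : |cY - (1 + κ)| ≤ δ) :
    3 / 4 ≤ cX ∧ cX ≤ 5 / 4 ∧ cY ≤ 9 / 4 ∧ κ / 2 ≤ cY - cX ∧ cY - cX ≤ 3 / 2 * κ := by
  rw [abs_le] at hX hY
  refine ⟨?_, ?_, ?_, ?_, ?_⟩ <;> linarith

/-- The standing conditions for doubling the variables around `a` with the cost
`profile K A ε ‖x - y‖ + b ‖x - a‖²`. -/
structure DoublingSetup (U : Set E) (H : Bool → E → E → ℝ) (ψ : Bool → E → ℝ) (C : ℝ) (L : NNReal)
    (ε : ℝ) (u : Bool → E → ℝ) (a : E) (ρ b K A κ δ C₁ : ℝ) : Prop extends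
    DominatingSlope U H ψ C L ρ b K where
  ε_pos : 0 < ε
  ε_le_one : ε ≤ 1
  A_nonneg : 0 ≤ A
  κ_pos : 0 < κ
  κ_le_one : κ ≤ 1
  δ_pos : 0 < δ
  δ_le : δ ≤ κ / 4
  abs_le : ∀ j, ∀ x ∈ closure U, |u j x| ≤ C
  ball_subset : ball a (3 * ρ) ⊆ closure U
  perturbation_le : ∀ j, ∀ x ∈ closure U, 4 * δ * C ≤ κ * ψ j x
  boundary_le : ∀ j x y, ‖x - a‖ = ρ → ‖x - y‖ ≤ ρ →
    u j x - u j y ≤ profile K A ε ‖x - y‖ + b * ρ ^ 2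
  hamiltonianDefectLE : HamiltonianDefectLE U H ε κ δ (K * (1 + A)) (2 * b * ρ) C₁
  curvature_ge : C₁ + 4 * C + 2 * L + 2 * b * finrank ℝ E + 1 ≤ K * A

/-- A pair `(x, y)` of interior points at which the doubled functional, with the terms `δ |u j|`
absorbed in the coefficients `cX` and `cY`, is maximal. -/
structure DoublingTouch (U : Set E) (u : Bool → E → ℝ) (φ : ℝ → ℝ) (a : E) (ρ b κ δ : ℝ) (j : Bool)
    (x y : E) (cX cY : ℝ) : Prop where
  mem_left : x ∈ U
  mem_right : y ∈ U
  ne : x ≠ y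
  norm_sub_center_lt : ‖x - a‖ < ρ
  abs_coeff_left : |cX - 1| ≤ δ
  abs_coeff_right : |cY - (1 + κ)| ≤ δ
  isLocalMax :
    IsLocalMax (fun q : E × E ↦ cX * u j q.1 - cY * u j q.2 - doublingCost φ a b q.1 q.2) (x, y)
  other_le : u (!j) x - (1 + κ) * u (!j) y ≤ cX * u j x - cY * u j y

variable {U : Set E} {H : Bool → E → E → ℝ} {ψ : Bool → E → ℝ} {γ : ℝ → ℝ} {C : ℝ} {L : NNReal}
  {ε : ℝ} {u : Bool → E → ℝ} {a : E} {ρ b K A κ δ C₁ : ℝ}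

namespace DoublingSetup

theorem mem_closure {q : E × E} (T : DoublingSetup U H ψ C L ε u a ρ b K A κ δ C₁)
    (hq : q ∈ doublingDomain a ρ) : q.1 ∈ closure U ∧ q.2 ∈ closure U :=
  (mem_ball_of_mem_doublingDomain T.ρ_pos hq).imp (T.ball_subset ·) (T.ball_subset ·)

theorem lt_doublingFunctional_center (T : DoublingSetup U H ψ C L ε u a ρ b K A κ δ C₁) {k : Bool}
    {w : E} (hw : ‖a - w‖ ≤ ρ) (hgap : profile K A ε ‖a - w‖ + 4 * κ * C < u k a - u k w) :
    (κ + 2 * δ) * C < doublingFunctional (u k) (profile K A ε) a b κ δ (a, w) := by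
  have hdom : (a, w) ∈ doublingDomain a ρ := ⟨by simpa using T.ρ_pos.le, hw⟩
  have hκw : κ * u k w ≤ κ * C :=
    mul_le_mul_of_nonneg_left (le_of_abs_le (T.abs_le k w (T.mem_closure hdom).2)) T.κ_pos.le
  have hδC : δ * C ≤ κ / 4 * C := mul_le_mul_of_nonneg_right T.δ_le T.C_pos.le
  have hκC : 0 < κ * C := mul_pos T.κ_pos T.C_pos
  have ha : 0 ≤ δ * |u k a| := mul_nonneg T.δ_pos.le (abs_nonneg _)
  have hw : 0 ≤ δ * |u k w| := mul_nonneg T.δ_pos.le (abs_nonneg _)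
  simp only [doublingFunctional, doublingCost, sub_self, norm_zero]
  linarith

theorem interior_of_lt_doublingFunctional (T : DoublingSetup U H ψ C L ε u a ρ b K A κ δ C₁)
    {j : Bool} {x y : E} (hq : (x, y) ∈ doublingDomain a ρ)
    (hlarge : (κ + 2 * δ) * C < doublingFunctional (u j) (profile K A ε) a b κ δ (x, y)) :
    x ≠ y ∧ ‖x - a‖ < ρ ∧ ‖x - y‖ < ρ := by
  have hx := T.abs_le j x (T.mem_closure hq).1
  have hy := T.abs_le j y (T.mem_closure hq).2
  have hδx : δ * |u j x| ≤ δ * C := mul_le_mul_of_nonneg_left hx T.δ_pos.le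
  have hδy : δ * |u j y| ≤ δ * C := mul_le_mul_of_nonneg_left hy T.δ_pos.le
  have hκy : κ * -u j y ≤ κ * C :=
    mul_le_mul_of_nonneg_left ((neg_le_abs _).trans hy) T.κ_pos.le
  have hb : 0 ≤ b * ‖x - a‖ ^ 2 := mul_nonneg T.b_nonneg (sq_nonneg _)
  simp only [doublingFunctional, doublingCost] at hlarge
  have hgap : profile K A ε ‖x - y‖ + b * ‖x - a‖ ^ 2 < u j x - u j y := by linarith
  refine ⟨?_, lt_of_le_of_ne hq.1 fun hxa ↦ ?_, lt_of_le_of_ne hq.2 fun hxy ↦ ?_⟩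
  · rintro rfl
    simp only [profile, sub_self, norm_zero, neg_zero, zero_div, Real.exp_zero] at hgap
    linarith
  · rw [hxa] at hgap
    exact hgap.not_ge (T.boundary_le j x y hxa hq.2)
  · have hφ := mul_le_profile T.slope_pos.le T.A_nonneg T.ε_pos T.ρ_pos.le
    rw [hxy] at hgap
    linarith [le_of_abs_le hx, neg_le_of_abs_le hy, T.oscillation_le]

theorem norm_smul_sub_center_le (T : DoublingSetup U H ψ C L ε u a ρ b K A κ δ C₁) {x : E}
    (hx : ‖x - a‖ ≤ ρ) : ‖(2 * b) • (x - a)‖ ≤ 2 * b * ρ := by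
  have hb := T.b_nonneg
  rw [norm_smul, Real.norm_of_nonneg (by positivity)]
  gcongr

theorem norm_smul_sub_center_le_profileDeriv (T : DoublingSetup U H ψ C L ε u a ρ b K A κ δ C₁)
    {x : E} (hx : ‖x - a‖ ≤ ρ) (t : ℝ) : ‖(2 * b) • (x - a)‖ ≤ profileDeriv K A ε t / 4 := by
  linarith [T.norm_smul_sub_center_le hx, T.localization_le,
    le_profileDeriv (ε := ε) (t := t) T.slope_pos.le T.A_nonneg]

theorem profileDeriv_pos (T : DoublingSetup U H ψ C L ε u a ρ b K A κ δ C₁) (t : ℝ) :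
    0 < profileDeriv K A ε t :=
  T.slope_pos.trans_le (le_profileDeriv T.slope_pos.le T.A_nonneg)

variable [FiniteDimensional ℝ E]

theorem differentiableAt (D : ObstacleSystem U H ψ γ) (S : PenalizedSolution U H ψ γ ε u)
    (T : DoublingSetup U H ψ C L ε u a ρ b K A κ δ C₁) (j : Bool) {x : E}
    (hx : x ∈ ball a (3 * ρ)) : DifferentiableAt ℝ (u j) x :=
  (S.isDirichletOn j).differentiableAt_of_mem_interior_closure D.isOpen (S.continuousOn_gradient j)
    (mem_interior.2 ⟨_, T.ball_subset, isOpen_ball, hx⟩)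

theorem exists_doublingTouch (D : ObstacleSystem U H ψ γ) (S : PenalizedSolution U H ψ γ ε u)
    (T : DoublingSetup U H ψ C L ε u a ρ b K A κ δ C₁) {k : Bool} {w : E} (hw : ‖a - w‖ ≤ ρ)
    (hgap : profile K A ε ‖a - w‖ + 4 * κ * C < u k a - u k w) :
    ∃ j x y cX cY, DoublingTouch U u (profile K A ε) a ρ b κ δ j x y cX cY := by
  have hcenter : (a, w) ∈ doublingDomain a ρ := ⟨by simpa using T.ρ_pos.le, hw⟩
  obtain ⟨j, ⟨x, y⟩, hq, hmax⟩ := exists_forall_le_of_isCompact (isCompact_doublingDomain a T.ρ_pos)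
    ⟨_, hcenter⟩ fun j ↦ continuousOn_doublingFunctional (b := b) (κ := κ) (δ := δ)
      (S.continuousOn j) (contDiff_profile (K := K) (A := A) (ε := ε)).continuous T.ρ_pos
      T.ball_subset
  obtain ⟨hxy, hxa, hxyρ⟩ := T.interior_of_lt_doublingFunctional hq
    ((T.lt_doublingFunctional_center hw hgap).trans_le (hmax k _ hcenter))
  have hlocal : IsLocalMax (doublingFunctional (u j) (profile K A ε) a b κ δ) (x, y) := by
    filter_upwards [doublingDomain_mem_nhds hxa hxyρ] with q hq using hmax j q hq
  obtain ⟨hxball, hyball⟩ := mem_ball_of_mem_doublingDomain T.ρ_pos hq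
  obtain ⟨hx0, hy0, cX, cY, hcX, hcY, hval, htouch⟩ :=
    exists_coeffs_of_isLocalMax_doublingFunctional T.δ_pos
      (T.differentiableAt D S j hxball) (T.differentiableAt D S j hyball)
      (fun s ↦ profile_le_tangent T.slope_pos.le T.A_nonneg T.ε_pos s _) hxy
      ((T.norm_smul_sub_center_le_profileDeriv hxa.le _).trans_lt
        (div_lt_self (T.profileDeriv_pos _) (by norm_num))) hlocal
  have hmem (z : E) (hz : z ∈ closure U) (hz0 : u j z ≠ 0) : z ∈ U :=
    not_not.1 fun hzU ↦ hz0 (S.eq_zero j z (D.mem_frontier hz hzU))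
  refine ⟨j, x, y, cX, cY, hmem x (T.mem_closure hq).1 hx0, hmem y (T.mem_closure hq).2 hy0, hxy,
    hxa, hcX, hcY, htouch, ?_⟩
  have hother := hmax (!j) (x, y) hq
  simp only [doublingFunctional] at hother
  linarith [mul_nonneg T.δ_pos.le (abs_nonneg (u (!j) x)),
    mul_nonneg T.δ_pos.le (abs_nonneg (u (!j) y))]

end DoublingSetup

end Doubling

theorem IsPenalty.apply_add_le {γ : ℝ → ℝ} (hγ : IsPenalty γ) {l : ℝ} (hl : 0 ≤ l) (s : ℝ) :
    γ (s + l) ≤ γ s + l := by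
  have hdist := hγ.lipschitzWith.dist_le_mul (s + l) s
  rw [Real.dist_eq, Real.dist_eq, add_sub_cancel_left, abs_of_nonneg hl, NNReal.coe_one,
    one_mul] at hdist
  linarith [le_of_abs_le hdist]

/-- By convexity and `γ 0 = 0`, the map `c ↦ c * γ (m / c)` is decreasing for each `m`. -/
theorem IsPenalty.mul_apply_div_sub_le {γ : ℝ → ℝ} (hγ : IsPenalty γ) {cX cY l s t ε : ℝ}
    (hX : 0 < cX) (hXY : cX ≤ cY) (hε : 0 < ε) (hl : 0 ≤ l)
    (hst : cY * s - cX * (l * ε) ≤ cX * t) :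
    cY * γ (s / ε) - cX * l ≤ cX * γ (t / ε) := by
  have hY : 0 < cY := hX.trans_le hXY
  have hscale : cY * γ (s / ε) ≤ cX * γ (cY / cX * (s / ε)) := by
    have hconv := hγ.apply_mul_le (t := cX / cY) (by positivity) ((div_le_one hY).2 hXY)
      (cY / cX * (s / ε))
    rw [show cX / cY * (cY / cX * (s / ε)) = s / ε by field_simp, div_mul_eq_mul_div,
      le_div_iff₀ hY] at hconv
    linarith
  have hshift : cY / cX * (s / ε) ≤ t / ε + l := by
    rw [div_mul_div_comm, div_le_iff₀ (by positivity)]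
    calc cY * s ≤ cX * t + cX * (l * ε) := by linarith
      _ = (t / ε + l) * (cX * ε) := by field_simp
  have hbound := mul_le_mul_of_nonneg_left ((hγ.monotone hshift).trans (hγ.apply_add_le hl _)) hX.le
  linarith

section DoublingEstimate

variable {E : Type*} [NormedAddCommGroup E] [InnerProductSpace ℝ E] {U : Set E}
  {H : Bool → E → E → ℝ} {ψ : Bool → E → ℝ} {γ : ℝ → ℝ} {C : ℝ} {L : NNReal} {ε : ℝ}
  {u : Bool → E → ℝ} {a : E} {ρ b K A κ δ C₁ : ℝ} {j : Bool} {x y : E} {cX cY : ℝ}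

namespace DoublingTouch

theorem coeff_bounds (T : DoublingSetup U H ψ C L ε u a ρ b K A κ δ C₁)
    (τ : DoublingTouch U u (profile K A ε) a ρ b κ δ j x y cX cY) :
    3 / 4 ≤ cX ∧ cX ≤ 5 / 4 ∧ cY ≤ 9 / 4 ∧ κ / 2 ≤ cY - cX ∧ cY - cX ≤ 3 / 2 * κ :=
  doubling_coeff_bounds T.κ_le_one T.δ_le τ.abs_coeff_left τ.abs_coeff_right

theorem mul_obstacle_gap_le (T : DoublingSetup U H ψ C L ε u a ρ b K A κ δ C₁)
    (τ : DoublingTouch U u (profile K A ε) a ρ b κ δ j x y cX cY) :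
    cY * (u j y - u (!j) y - ψ j y) - cX * (L * ‖x - y‖) ≤ cX * (u j x - u (!j) x - ψ j x) := by
  obtain ⟨hX0, -, -, hXY, -⟩ := τ.coeff_bounds T
  have hx := subset_closure τ.mem_left
  have hy := subset_closure τ.mem_right
  have hcoeffX : (cX - 1) * u (!j) x ≤ δ * C :=
    (le_abs_self _).trans ((abs_mul _ _).trans_le
      (mul_le_mul τ.abs_coeff_left (T.abs_le _ x hx) (abs_nonneg _) T.δ_pos.le))
  have hcoeffY : -((cY - (1 + κ)) * u (!j) y) ≤ δ * C :=
    (neg_le_abs _).trans ((abs_mul _ _).trans_le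
      (mul_le_mul τ.abs_coeff_right (T.abs_le _ y hy) (abs_nonneg _) T.δ_pos.le))
  have hψy : 2 * δ * C ≤ (cY - cX) * ψ j y := by
    have hpert := T.perturbation_le j y hy
    have hψ0 : 0 ≤ ψ j y := (pos_of_mul_pos_right
      ((mul_pos (mul_pos four_pos T.δ_pos) T.C_pos).trans_le hpert) T.κ_pos.le).le
    linarith [mul_le_mul_of_nonneg_right hXY hψ0]
  have hψ : cX * (ψ j x - ψ j y) ≤ cX * (L * ‖x - y‖) := by
    have hlip := (T.lipschitzOnWith_ψ j).dist_le_mul x hx y hy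
    rw [Real.dist_eq, dist_eq_norm] at hlip
    gcongr
    exact (le_abs_self _).trans hlip
  linarith [τ.other_le]

theorem mul_penalty_sub_le (D : ObstacleSystem U H ψ γ)
    (T : DoublingSetup U H ψ C L ε u a ρ b K A κ δ C₁)
    (τ : DoublingTouch U u (profile K A ε) a ρ b κ δ j x y cX cY) (hnear : ‖x - y‖ ≤ ε) :
    cY * γ ((u j y - u (!j) y - ψ j y) / ε) - 2 * L ≤
      cX * γ ((u j x - u (!j) x - ψ j x) / ε) := by
  obtain ⟨hX0, hX1, -, hXY, -⟩ := τ.coeff_bounds T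
  have hL : cX * (L : ℝ) ≤ 2 * L := mul_le_mul_of_nonneg_right (by linarith) L.coe_nonneg
  have hgap : cY * (u j y - u (!j) y - ψ j y) - cX * (L * ε) ≤ cX * (u j x - u (!j) x - ψ j x) := by
    refine le_trans ?_ (τ.mul_obstacle_gap_le T)
    gcongr
  linarith [D.isPenalty.mul_apply_div_sub_le (by linarith) (by linarith [T.κ_pos]) T.ε_pos
    L.coe_nonneg hgap]

variable [FiniteDimensional ℝ E]

theorem gradient_left_eq_and_laplacian_left_le (D : ObstacleSystem U H ψ γ)
    (S : PenalizedSolution U H ψ γ ε u) (T : DoublingSetup U H ψ C L ε u a ρ b K A κ δ C₁)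
    (τ : DoublingTouch U u (profile K A ε) a ρ b κ δ j x y cX cY) :
    gradient (u j) x = cX⁻¹ • ((profileDeriv K A ε ‖x - y‖ * ‖x - y‖⁻¹) • (x - y) +
        (2 * b) • (x - a)) ∧
      cX * Δ (u j) x ≤
        (finrank ℝ E : ℝ) * (profileDeriv K A ε ‖x - y‖ * ‖x - y‖⁻¹ + 2 * b) := by
  have hsmooth := S.contDiffAt D.isOpen j τ.mem_left
  have htouch := gradient_eq_and_laplacian_le_of_isLocalMax_doubled_left
    (f := fun z ↦ cX * u j z) (g := fun z ↦ cY * u j z) (contDiffAt_const.mul hsmooth)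
    (fun s ↦ profile_le_tangent T.slope_pos.le T.A_nonneg T.ε_pos s _) (T.profileDeriv_pos _).le
    τ.ne τ.isLocalMax
  rw [gradient_const_mul, laplacian_const_mul _ hsmooth] at htouch
  rwa [eq_inv_smul_iff₀ (by linarith [(τ.coeff_bounds T).1])]

theorem gradient_right_eq (D : ObstacleSystem U H ψ γ) (S : PenalizedSolution U H ψ γ ε u)
    (T : DoublingSetup U H ψ C L ε u a ρ b K A κ δ C₁)
    (τ : DoublingTouch U u (profile K A ε) a ρ b κ δ j x y cX cY) :
    gradient (u j) y = cY⁻¹ • (profileDeriv K A ε ‖x - y‖ * ‖x - y‖⁻¹) • (x - y) := by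
  obtain ⟨hX0, -, -, hXY, -⟩ := τ.coeff_bounds T
  rw [eq_inv_smul_iff₀ (by linarith [T.κ_pos]), ← gradient_const_mul]
  exact gradient_eq_of_isLocalMax_doubled_right (f := fun z ↦ cX * u j z)
    (g := fun z ↦ cY * u j z) (contDiffAt_const.mul (S.contDiffAt D.isOpen j τ.mem_right))
    (fun s ↦ profile_le_tangent T.slope_pos.le T.A_nonneg T.ε_pos s _) (T.profileDeriv_pos _).le
    τ.ne τ.isLocalMax

theorem mul_norm_le_mul_H (D : ObstacleSystem U H ψ γ) (S : PenalizedSolution U H ψ γ ε u)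
    (T : DoublingSetup U H ψ C L ε u a ρ b K A κ δ C₁)
    (τ : DoublingTouch U u (profile K A ε) a ρ b κ δ j x y cX cY) :
    6 * (finrank ℝ E + 1 : ℝ) * profileDeriv K A ε ‖x - y‖ ≤
      cX * H j x (gradient (u j) x) := by
  obtain ⟨hX0, hX1, -⟩ := τ.coeff_bounds T
  rw [(τ.gradient_left_eq_and_laplacian_left_le D S T).1]
  set d := profileDeriv K A ε ‖x - y‖
  set q := (d * ‖x - y‖⁻¹) • (x - y) + (2 * b) • (x - a)
  have hKd : K ≤ d := le_profileDeriv T.slope_pos.le T.A_nonneg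
  have hq : 3 / 4 * d ≤ ‖q‖ := by
    have htri := norm_sub_le q ((2 * b) • (x - a))
    rw [add_sub_cancel_right, norm_mul_inv_smul_sub (T.profileDeriv_pos _).le τ.ne] at htri
    linarith [T.norm_smul_sub_center_le_profileDeriv τ.norm_sub_center_lt.le ‖x - y‖]
  have hnorm : cX * ‖cX⁻¹ • q‖ = ‖q‖ := by
    rw [norm_smul, Real.norm_of_nonneg (by positivity), mul_inv_cancel_left₀ (by positivity)]
  have hlarge : K / 4 ≤ ‖cX⁻¹ • q‖ := by
    have := mul_le_mul_of_nonneg_right hX1 (norm_nonneg (cX⁻¹ • q))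
    linarith [T.slope_pos]
  calc 6 * (finrank ℝ E + 1 : ℝ) * d = 8 * (finrank ℝ E + 1 : ℝ) * (3 / 4 * d) := by ring
    _ ≤ 8 * (finrank ℝ E + 1 : ℝ) * (cX * ‖cX⁻¹ • q‖) := by rw [hnorm]; gcongr
    _ = cX * (8 * (finrank ℝ E + 1 : ℝ) * ‖cX⁻¹ • q‖) := by ring
    _ ≤ cX * H j x (cX⁻¹ • q) := by
      gcongr
      exact T.superlinear j x (subset_closure τ.mem_left) _ hlarge

/-- At distances above `ε` the viscosity term is at most of the order of the slope, and the
superlinear growth of `H` wins. -/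
theorem norm_sub_lt (D : ObstacleSystem U H ψ γ) (S : PenalizedSolution U H ψ γ ε u)
    (T : DoublingSetup U H ψ C L ε u a ρ b K A κ δ C₁)
    (τ : DoublingTouch U u (profile K A ε) a ρ b κ δ j x y cX cY) : ‖x - y‖ < ε := by
  by_contra! hfar
  obtain ⟨hX0, hX1, -⟩ := τ.coeff_bounds T
  have hH := τ.mul_norm_le_mul_H D S T
  have hlap := (τ.gradient_left_eq_and_laplacian_left_le D S T).2
  have hpde := congrArg (cX * ·) (S.pde j x τ.mem_left)
  set d := profileDeriv K A ε ‖x - y‖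
  have hε := T.ε_pos
  have hb := T.b_nonneg
  have hd := T.profileDeriv_pos ‖x - y‖
  have hKd : K ≤ d := le_profileDeriv T.slope_pos.le T.A_nonneg
  have hviscosity : cX * (ε * Δ (u j) x) ≤ finrank ℝ E * d + 2 * b * finrank ℝ E := by
    have hratio : ε * ‖x - y‖⁻¹ ≤ 1 := by
      rwa [← div_eq_mul_inv, div_le_one (T.ε_pos.trans_le hfar)]
    calc cX * (ε * Δ (u j) x) = ε * (cX * Δ (u j) x) := by ring
      _ ≤ ε * (finrank ℝ E * (d * ‖x - y‖⁻¹ + 2 * b)) := by gcongr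
      _ = finrank ℝ E * d * (ε * ‖x - y‖⁻¹) + 2 * b * finrank ℝ E * ε := by ring
      _ ≤ finrank ℝ E * d * 1 + 2 * b * finrank ℝ E * 1 := by gcongr; exact T.ε_le_one
      _ = finrank ℝ E * d + 2 * b * finrank ℝ E := by ring
  have hpenalty : 0 ≤ cX * γ ((u j x - u (!j) x - ψ j x) / ε) :=
    mul_nonneg (by linarith) (D.isPenalty.nonneg _)
  have hu : cX * -u j x ≤ 2 * C := by
    have habs := (neg_le_abs _).trans (T.abs_le j x (subset_closure τ.mem_left))
    linarith [mul_le_mul_of_nonneg_left habs (show 0 ≤ cX by linarith),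
      mul_le_mul_of_nonneg_right hX1 T.C_pos.le, T.C_pos]
  have hfinrank : (finrank ℝ E : ℝ) * (C + 2 * b) ≤ finrank ℝ E * d := by
    gcongr
    linarith [T.lt_slope]
  linarith [T.lt_slope, T.C_pos, mul_nonneg (Nat.cast_nonneg (α := ℝ) (finrank ℝ E)) T.C_pos.le,
    mul_nonneg (Nat.cast_nonneg (α := ℝ) (finrank ℝ E)) hd.le]

theorem mul_laplacian_sub_le (D : ObstacleSystem U H ψ γ) (S : PenalizedSolution U H ψ γ ε u)
    (T : DoublingSetup U H ψ C L ε u a ρ b K A κ δ C₁)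
    (τ : DoublingTouch U u (profile K A ε) a ρ b κ δ j x y cX cY) (hnear : ‖x - y‖ ≤ ε) :
    cX * (ε * Δ (u j) x) - cY * (ε * Δ (u j) y) ≤ -(K * A) + 2 * b * finrank ℝ E := by
  have hε := T.ε_pos
  have hb := T.b_nonneg
  have hKA : 0 ≤ K * A := mul_nonneg T.slope_pos.le T.A_nonneg
  have hsmoothX := S.contDiffAt D.isOpen j τ.mem_left
  have hsmoothY := S.contDiffAt D.isOpen j τ.mem_right
  have hlap := laplacian_sub_laplacian_le_of_isLocalMax_doubled (f := fun z ↦ cX * u j z)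
    (g := fun z ↦ cY * u j z) (contDiffAt_const.mul hsmoothX) (contDiffAt_const.mul hsmoothY)
    contDiff_profile (hasDerivAt_profile hε) (hasDerivAt_profileDeriv _) τ.ne τ.isLocalMax
  rw [laplacian_const_mul _ hsmoothX, laplacian_const_mul _ hsmoothY] at hlap
  have hexp : 1 / 3 ≤ Real.exp (-‖x - y‖ / ε) := by
    have hmono : Real.exp (-1) ≤ Real.exp (-‖x - y‖ / ε) := by
      rw [Real.exp_le_exp, neg_div, neg_le_neg_iff, div_le_one hε]
      exact hnear
    refine le_trans ?_ hmono
    rw [Real.exp_neg, one_div]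
    exact inv_anti₀ (Real.exp_pos 1) Real.exp_one_lt_three.le
  calc cX * (ε * Δ (u j) x) - cY * (ε * Δ (u j) y)
      = ε * (cX * Δ (u j) x - cY * Δ (u j) y) := by ring
    _ ≤ ε * (4 * (-(K * A / ε) * Real.exp (-‖x - y‖ / ε)) + 2 * b * finrank ℝ E) := by gcongr
    _ = -(4 * (K * A * Real.exp (-‖x - y‖ / ε))) + 2 * b * finrank ℝ E * ε := by field_simp
    _ ≤ -(4 * (K * A * (1 / 3))) + 2 * b * finrank ℝ E * 1 := by gcongr; exact T.ε_le_one
    _ ≤ -(K * A) + 2 * b * finrank ℝ E := by linarith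

/-- At distances below `ε` the concavity of the profile makes the viscosity term so negative that it
cannot balance the remaining terms. -/
theorem lt_norm_sub (D : ObstacleSystem U H ψ γ) (S : PenalizedSolution U H ψ γ ε u)
    (T : DoublingSetup U H ψ C L ε u a ρ b K A κ δ C₁)
    (τ : DoublingTouch U u (profile K A ε) a ρ b κ δ j x y cX cY) : ε < ‖x - y‖ := by
  by_contra! hnear
  obtain ⟨hX0, hX1, hY1, hXY, -⟩ := τ.coeff_bounds T
  have hx := subset_closure τ.mem_left
  have hy := subset_closure τ.mem_right
  have hpenalty := τ.mul_penalty_sub_le D T hnear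
  have hlap := τ.mul_laplacian_sub_le D S T hnear
  have hH := T.hamiltonianDefectLE j x hx y hy hnear cX cY τ.abs_coeff_left τ.abs_coeff_right _ _
    ((norm_mul_inv_smul_sub (T.profileDeriv_pos ‖x - y‖).le τ.ne).trans_le
      (profileDeriv_le T.slope_pos.le T.A_nonneg T.ε_pos (norm_nonneg _)))
    (T.norm_smul_sub_center_le τ.norm_sub_center_lt.le)
  rw [← (τ.gradient_left_eq_and_laplacian_left_le D S T).1, ← τ.gradient_right_eq D S T] at hH
  rw [← S.pde j x τ.mem_left, ← S.pde j y τ.mem_right] at hlap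
  have hux : cX * -C ≤ cX * u j x := by
    gcongr
    exact neg_le_of_abs_le (T.abs_le j x hx)
  have huy : cY * u j y ≤ cY * C := by
    have hY0 : 0 ≤ cY := by linarith [T.κ_pos]
    gcongr
    exact le_of_abs_le (T.abs_le j y hy)
  have hC : (cX + cY) * C ≤ 4 * C := mul_le_mul_of_nonneg_right (by linarith) T.C_pos.le
  linarith [T.curvature_ge]

end DoublingTouch

variable [FiniteDimensional ℝ E]

theorem DoublingSetup.sub_le_profile_add (D : ObstacleSystem U H ψ γ)
    (S : PenalizedSolution U H ψ γ ε u) (T : DoublingSetup U H ψ C L ε u a ρ b K A κ δ C₁)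
    (j : Bool) {y : E} (hy : ‖a - y‖ ≤ ρ) :
    u j a - u j y ≤ profile K A ε ‖a - y‖ + 4 * κ * C := by
  by_contra! hgap
  obtain ⟨_, _, _, _, _, τ⟩ := T.exists_doublingTouch D S hy hgap
  exact lt_asymm (τ.norm_sub_lt D S T) (τ.lt_norm_sub D S T)

end DoublingEstimate

section HamiltonianDefect

variable {E : Type*} [NormedAddCommGroup E] [InnerProductSpace ℝ E]

/-- `cY⁻¹ • p` is a convex combination of `cX⁻¹ • (p + r)` and a point of norm at most `R`. -/
theorem mul_apply_inv_smul_le_of_convexOn {f : E → ℝ} (hf : ConvexOn ℝ univ f) {cX cY M R : ℝ}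
    (hX : 0 < cX) (hXY : cX < cY) (hM : ∀ q, ‖q‖ ≤ R → f q ≤ M) (p : E) {r : E}
    (hr : ‖r‖ ≤ (cY - cX) * R) :
    cY * f (cY⁻¹ • p) ≤ cX * f (cX⁻¹ • (p + r)) + (cY - cX) * M := by
  have hY : 0 < cY := hX.trans hXY
  have hgap : 0 < cY - cX := sub_pos.2 hXY
  set q := -(cY - cX)⁻¹ • r
  have hq : f q ≤ M := hM q (by
    rwa [norm_smul, norm_neg, norm_inv, Real.norm_of_nonneg hgap.le, inv_mul_le_iff₀ hgap])
  have hcomb : (cX / cY) • cX⁻¹ • (p + r) + ((cY - cX) / cY) • q = cY⁻¹ • p := by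
    rw [smul_smul, smul_smul, show cX / cY * cX⁻¹ = cY⁻¹ by field_simp,
      show (cY - cX) / cY * -(cY - cX)⁻¹ = -cY⁻¹ by field_simp]
    module
  have hconv := hf.2 (mem_univ (cX⁻¹ • (p + r))) (mem_univ q)
    (show 0 ≤ cX / cY by positivity) (show 0 ≤ (cY - cX) / cY by positivity) (by field_simp; ring)
  rw [hcomb, smul_eq_mul, smul_eq_mul] at hconv
  calc cY * f (cY⁻¹ • p)
      ≤ cY * (cX / cY * f (cX⁻¹ • (p + r)) + (cY - cX) / cY * f q) := by gcongr
    _ = cX * f (cX⁻¹ • (p + r)) + (cY - cX) * f q := by field_simp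
    _ ≤ cX * f (cX⁻¹ • (p + r)) + (cY - cX) * M := by gcongr

theorem norm_inv_smul_add_le {c P r₀ : ℝ} (hc : 3 / 4 ≤ c) {p r : E} (hp : ‖p‖ ≤ P)
    (hr : ‖r‖ ≤ r₀) : ‖c⁻¹ • (p + r)‖ ≤ 2 * (P + r₀) := by
  have hinv : c⁻¹ ≤ 2 := inv_le_of_inv_le₀ two_pos (by linarith)
  rw [norm_smul, Real.norm_of_nonneg (by positivity)]
  exact mul_le_mul hinv ((norm_add_le p r).trans (add_le_add hp hr)) (norm_nonneg _) two_pos.le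

theorem norm_inv_smul_add_sub_inv_smul_le {cX cY κ P r₀ : ℝ} (hX : 3 / 4 ≤ cX) (hXY : cX ≤ cY)
    (hκ : cY - cX ≤ 3 / 2 * κ) {p r : E} (hp : ‖p‖ ≤ P) (hr : ‖r‖ ≤ r₀) :
    ‖cX⁻¹ • (p + r) - cY⁻¹ • p‖ ≤ 4 * κ * P + 2 * r₀ := by
  have hX0 : 0 < cX := by linarith
  have hY0 : 0 < cY := by linarith
  have hXinv : cX⁻¹ ≤ 4 / 3 := inv_le_of_inv_le₀ (by norm_num) (by linarith)
  have hYinv : cY⁻¹ ≤ 4 / 3 := inv_le_of_inv_le₀ (by norm_num) (by linarith)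
  have hinv : cX⁻¹ - cY⁻¹ = (cY - cX) * (cX⁻¹ * cY⁻¹) := by field_simp
  have hinv0 : 0 ≤ cX⁻¹ - cY⁻¹ := by
    rw [hinv]
    exact mul_nonneg (sub_nonneg.2 hXY) (by positivity)
  have hinvκ : cX⁻¹ - cY⁻¹ ≤ 4 * κ := by
    calc cX⁻¹ - cY⁻¹ ≤ 3 / 2 * κ * (4 / 3 * (4 / 3)) := by
          rw [hinv]
          gcongr
          linarith
      _ ≤ 4 * κ := by linarith
  have hr₀ : 0 ≤ r₀ := (norm_nonneg r).trans hr
  calc ‖cX⁻¹ • (p + r) - cY⁻¹ • p‖ = ‖(cX⁻¹ - cY⁻¹) • p + cX⁻¹ • r‖ := by congr 1; module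
    _ ≤ (cX⁻¹ - cY⁻¹) * ‖p‖ + cX⁻¹ * ‖r‖ := by
      refine (norm_add_le _ _).trans_eq ?_
      rw [norm_smul, norm_smul, Real.norm_of_nonneg hinv0, Real.norm_of_nonneg (by positivity)]
    _ ≤ 4 * κ * P + 4 / 3 * r₀ := by gcongr; linarith
    _ ≤ 4 * κ * P + 2 * r₀ := by linarith

variable [FiniteDimensional ℝ E] {U : Set E} {H : Bool → E → E → ℝ} {ψ : Bool → E → ℝ} {γ : ℝ → ℝ}

namespace ObstacleSystem

theorem exists_eventually_hamiltonianDefectLE (D : ObstacleSystem U H ψ γ) {κ δ : ℝ} (hκ : 0 < κ)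
    (hκ1 : κ ≤ 1) (hδ : δ ≤ κ / 4) (r₀ : ℝ) :
    ∃ C₁ ≥ 0, ∀ P, ∀ᶠ ε in 𝓝[>] (0 : ℝ), HamiltonianDefectLE U H ε κ δ P r₀ C₁ := by
  obtain ⟨M, hM, hM0⟩ := ((D.eventually_abs_H_le (2 * r₀ / κ)).and (eventually_ge_atTop 0)).exists
  refine ⟨2 + 2 * M, by linarith, fun P ↦ ?_⟩
  filter_upwards [D.eventually_abs_H_sub_lt (2 * (P + r₀)) one_pos, self_mem_nhdsWithin]
    with ε hunif hε j x hx y hy hxy cX cY hcX hcY p r hp hr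
  obtain ⟨hX0, hX1, -, hXY, hXY'⟩ := doubling_coeff_bounds hκ1 hδ hcX hcY
  have hr₀ : 0 ≤ r₀ := (norm_nonneg r).trans hr
  have hconv := mul_apply_inv_smul_le_of_convexOn (D.convexOn_H j y hy) (by linarith)
    (show cX < cY by linarith) (fun q hq ↦ le_of_abs_le (hM j y hy q hq)) p (r := r) (by
      calc ‖r‖ ≤ r₀ := hr
        _ = κ / 2 * (2 * r₀ / κ) := by field_simp
        _ ≤ (cY - cX) * (2 * r₀ / κ) := by gcongr)
  have hq := norm_inv_smul_add_le hX0 hp hr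
  have hshift := (abs_lt.1 (hunif j x hx y hy _ _ hq hq hxy (by simpa using le_of_lt hε))).1
  have hloss := mul_le_mul_of_nonneg_left hshift.le (show 0 ≤ cX by linarith)
  have hMgap : (cY - cX) * M ≤ 2 * M := mul_le_mul_of_nonneg_right (by linarith) hM0
  linarith

theorem eventually_hamiltonianDefectLE_one (D : ObstacleSystem U H ψ γ) (P : ℝ) :
    ∀ᶠ r₀ in 𝓝[>] (0 : ℝ), ∀ᶠ ε in 𝓝[>] (0 : ℝ), ∀ᶠ κ in 𝓝[>] (0 : ℝ), ∀ δ ≤ κ / 4,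
      HamiltonianDefectLE U H ε κ δ P r₀ 1 := by
  obtain ⟨M, hM, hM0⟩ :=
    ((D.eventually_abs_H_le (2 * (P + 1))).and (eventually_ge_atTop 0)).exists
  obtain ⟨d, hunif, hd⟩ := ((D.eventually_abs_H_sub_lt (2 * (P + 1))
    (show (0 : ℝ) < 1 / 4 by norm_num)).and self_mem_nhdsWithin).exists
  have hd2 : 0 < d / 2 := half_pos hd
  filter_upwards [eventually_mul_le_nhdsGT_zero 1 one_pos, eventually_mul_le_nhdsGT_zero 2 hd2]
    with r₀ hr₀1 hr₀d
  filter_upwards [eventually_mul_le_nhdsGT_zero 1 hd] with ε hεd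
  filter_upwards [eventually_mul_le_nhdsGT_zero 1 one_pos, eventually_mul_le_nhdsGT_zero (4 * M)
    one_pos, eventually_mul_le_nhdsGT_zero (4 * P) hd2, self_mem_nhdsWithin]
    with κ hκ1 hκM hκP hκ δ hδ j x hx y hy hxy cX cY hcX hcY p r hp hr
  obtain ⟨hX0, hX1, -, hXY, hXY'⟩ := doubling_coeff_bounds (by linarith) hδ hcX hcY
  have hXY0 : cX ≤ cY := by linarith [mem_Ioi.1 hκ]
  have hpX := norm_inv_smul_add_le hX0 hp (hr.trans (by linarith : r₀ ≤ 1))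
  have hpY : ‖cY⁻¹ • p‖ ≤ 2 * (P + 1) := by
    simpa only [add_zero] using norm_inv_smul_add_le (hX0.trans hXY0) hp
      (norm_zero.trans_le zero_le_one)
  have hdiff := norm_inv_smul_add_sub_inv_smul_le hX0 hXY0 hXY' hp hr
  have hshift := (abs_lt.1 (hunif j x hx y hy _ _ hpX hpY (by linarith) (by linarith))).1
  have hloss := mul_le_mul_of_nonneg_left hshift.le (show 0 ≤ cX by linarith)
  have hgap : (cY - cX) * H j y (cY⁻¹ • p) ≤ 3 / 2 * κ * M :=
    (mul_le_mul_of_nonneg_left (le_of_abs_le (hM j y hy _ hpY)) (sub_nonneg.2 hXY0)).trans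
      (mul_le_mul_of_nonneg_right hXY' hM0)
  linarith

end ObstacleSystem

end HamiltonianDefect

section GradientBound

variable {E : Type*} [NormedAddCommGroup E] [InnerProductSpace ℝ E]
  {U : Set E} {H : Bool → E → E → ℝ} {ψ : Bool → E → ℝ} {γ : ℝ → ℝ}

theorem ObstacleSystem.exists_perturbation (D : ObstacleSystem U H ψ γ) (C : ℝ) {κ : ℝ}
    (hκ : 0 < κ) : ∃ δ > 0, δ ≤ κ / 4 ∧ ∀ j, ∀ x ∈ closure U, 4 * δ * C ≤ κ * ψ j x := by
  obtain ⟨α, hα, hψ⟩ := D.ψ_pos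
  obtain ⟨δ, hδκ, hδC, hδ⟩ := ((eventually_mul_le_nhdsGT_zero 4 hκ).and
    ((eventually_mul_le_nhdsGT_zero (4 * C) (mul_pos hκ hα)).and self_mem_nhdsWithin)).exists
  refine ⟨δ, hδ, by linarith, fun j x hx ↦ ?_⟩
  linarith [mul_le_mul_of_nonneg_left (hψ j x hx) hκ.le]

theorem DominatingSlope.exists_curvature_eq {C : ℝ} {L : NNReal} {ρ b K : ℝ}
    (hK : DominatingSlope U H ψ C L ρ b K) {C₁ : ℝ} (hC₁ : 0 ≤ C₁) :
    ∃ A ≥ 0, K * A = C₁ + 4 * C + 2 * L + 2 * b * finrank ℝ E + 1 := by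
  have hC := hK.C_pos
  have hb := hK.b_nonneg
  have hK0 := hK.slope_pos
  exact ⟨(C₁ + 4 * C + 2 * L + 2 * b * finrank ℝ E + 1) / K, by positivity, by field_simp⟩

variable [FiniteDimensional ℝ E]

theorem norm_gradient_le_of_eventually_abs_sub_le {f : E → ℝ} {x : E} {P : ℝ} (hP : 0 ≤ P)
    (h : ∀ᶠ y in 𝓝 x, |f y - f x| ≤ P * ‖y - x‖) : ‖gradient f x‖ ≤ P := by
  rw [gradient, LinearIsometryEquiv.norm_map]
  exact norm_fderiv_le_of_lip' ℝ hP h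

namespace ObstacleSystem

theorem exists_lipschitzOnWith_ψ (D : ObstacleSystem U H ψ γ) :
    ∃ L : NNReal, ∀ j, LipschitzOnWith L (ψ j) (closure U) := by
  have hψ (j : Bool) : ∃ L, LipschitzOnWith L (ψ j) (closure U) :=
    ((D.contDiff_ψ j).of_le one_le_two).locallyLipschitz.locallyLipschitzOn
      |>.exists_lipschitzOnWith_of_compact D.isCompact_closure
  choose L hL using hψ
  exact ⟨L false ⊔ L true, fun j ↦ (hL j).weaken (by cases j <;> simp)⟩

theorem exists_dominatingSlope (D : ObstacleSystem U H ψ γ) {C ρ : ℝ} (hC : 0 < C) (hρ : 0 < ρ) :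
    ∃ L b K, b * ρ ^ 2 = 2 * C ∧ DominatingSlope U H ψ C L ρ b K := by
  obtain ⟨L, hL⟩ := D.exists_lipschitzOnWith_ψ
  set b := 2 * C / ρ ^ 2
  obtain ⟨K, hloc, hosc, hlt, hsup⟩ := ((eventually_ge_atTop (8 * b * ρ)).and
    ((eventually_ge_atTop (2 * C / ρ)).and ((eventually_gt_atTop (C + 2 * b)).and
    ((tendsto_id.atTop_div_const four_pos).eventually
      (D.eventually_mul_norm_le_H (8 * (finrank ℝ E + 1 : ℝ))))))).exists
  exact ⟨L, b, K, div_mul_cancel₀ _ (by positivity), hC, hρ, by positivity, hloc,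
    (div_le_iff₀ hρ).1 hosc, hlt, hsup, hL⟩

end ObstacleSystem

namespace DominatingSlope

variable {C : ℝ} {L : NNReal} {ρ b K : ℝ}

/-- A localization with `b ρ² = 2 C` makes the boundary condition of the doubling trivial, at the
price of a large defect `C₁`. -/
theorem eventually_sub_le_add (D : ObstacleSystem U H ψ γ) (hK : DominatingSlope U H ψ C L ρ b K)
    (hC : ∀ ε > 0, ∀ u, PenalizedSolution U H ψ γ ε u → ∀ j, ∀ x ∈ closure U, |u j x| ≤ C)
    (hb : b * ρ ^ 2 = 2 * C) {η : ℝ} (hη : 0 < η) :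
    ∀ᶠ ε in 𝓝[>] 0, ∀ u, PenalizedSolution U H ψ γ ε u → ∀ a, ball a (3 * ρ) ⊆ closure U →
      ∀ j y, ‖a - y‖ ≤ ρ → u j a - u j y ≤ K * ‖a - y‖ + η := by
  obtain ⟨κ, hκ1, hκη, hκ⟩ := ((eventually_mul_le_nhdsGT_zero 1 one_pos).and
    ((eventually_mul_le_nhdsGT_zero (4 * C) (half_pos hη)).and self_mem_nhdsWithin)).exists
  rw [one_mul] at hκ1
  obtain ⟨δ, hδ, hδκ, hδC⟩ := D.exists_perturbation C hκ
  obtain ⟨C₁, hC₁, hdefect⟩ := D.exists_eventually_hamiltonianDefectLE hκ hκ1 hδκ (2 * b * ρ)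
  obtain ⟨A, hA, hKA⟩ := hK.exists_curvature_eq hC₁
  filter_upwards [hdefect (K * (1 + A)), eventually_mul_le_nhdsGT_zero 1 one_pos,
    eventually_mul_le_nhdsGT_zero (K * A) (half_pos hη), self_mem_nhdsWithin]
    with ε hdefect hε1 hεη hε u S a ha j y hy
  have hu := hC ε hε u S
  have hboundary (j : Bool) (x y : E) (hx : ‖x - a‖ = ρ) (hxy : ‖x - y‖ ≤ ρ) :
      u j x - u j y ≤ profile K A ε ‖x - y‖ + b * ρ ^ 2 := by
    obtain ⟨hxU, hyU⟩ := mem_ball_of_mem_doublingDomain hK.ρ_pos (q := (x, y)) ⟨hx.le, hxy⟩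
    have hprofile := mul_le_profile hK.slope_pos.le hA hε (norm_nonneg (x - y))
    linarith [mul_nonneg hK.slope_pos.le (norm_nonneg (x - y)), le_of_abs_le (hu j x (ha hxU)),
      neg_le_of_abs_le (hu j y (ha hyU))]
  have hT : DoublingSetup U H ψ C L ε u a ρ b K A κ δ C₁ :=
    { hK with
      ε_pos := hε, ε_le_one := by linarith, A_nonneg := hA, κ_pos := hκ, κ_le_one := hκ1
      δ_pos := hδ, δ_le := hδκ, abs_le := hu, ball_subset := ha, perturbation_le := hδC
      boundary_le := hboundary, hamiltonianDefectLE := hdefect, curvature_ge := hKA.ge }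
  linarith [hT.sub_le_profile_add D S j hy, profile_le_add hK.slope_pos.le hA (le_of_lt hε) ‖a - y‖]

/-- The estimate up to `η = b ρ²` verifies the boundary condition of the doubling for a small
localization `b`, whose defect is at most `1` whatever the perturbation `κ`; now `κ → 0`. -/
theorem exists_eventually_sub_le_mul (D : ObstacleSystem U H ψ γ)
    (hK : DominatingSlope U H ψ C L ρ b K)
    (hC : ∀ ε > 0, ∀ u, PenalizedSolution U H ψ γ ε u → ∀ j, ∀ x ∈ closure U, |u j x| ≤ C)
    (hb : b * ρ ^ 2 = 2 * C) :
    ∃ P ≥ 0, ∀ᶠ ε in 𝓝[>] 0, ∀ u, PenalizedSolution U H ψ γ ε u →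
      ∀ a, ball a (4 * ρ) ⊆ closure U → ∀ j y, ‖a - y‖ ≤ ρ → u j a - u j y ≤ P * ‖a - y‖ := by
  have hρ := hK.ρ_pos
  have hK0 := hK.slope_pos
  have hbpos : 0 < b := pos_of_mul_pos_left (hb ▸ mul_pos two_pos hK.C_pos) (sq_nonneg ρ)
  obtain ⟨A, hA, hKA⟩ := hK.exists_curvature_eq zero_le_one
  obtain ⟨r₀, hdefect, hr₀b, hr₀⟩ := ((D.eventually_hamiltonianDefectLE_one (K * (1 + A))).and
    ((eventually_mul_le_nhdsGT_zero 1 (show 0 < 2 * b * ρ by positivity)).and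
      self_mem_nhdsWithin)).exists
  obtain ⟨b', hb'pos, rfl⟩ : ∃ b' > 0, 2 * b' * ρ = r₀ :=
    ⟨r₀ / (2 * ρ), by positivity, by field_simp⟩
  have hb'b : b' ≤ b := by nlinarith
  refine ⟨K * (1 + A), by positivity, ?_⟩
  filter_upwards [hdefect, hK.eventually_sub_le_add D hC hb (show 0 < b' * ρ ^ 2 by positivity),
    eventually_mul_le_nhdsGT_zero 1 one_pos, self_mem_nhdsWithin]
    with ε hdefect hrough hε1 hε u S a ha j y hy
  have hboundary (j : Bool) (x y : E) (hx : ‖x - a‖ = ρ) (hxy : ‖x - y‖ ≤ ρ) :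
      u j x - u j y ≤ profile K A ε ‖x - y‖ + b' * ρ ^ 2 := by
    have hxball : ball x (3 * ρ) ⊆ closure U :=
      (ball_subset_ball' (by rw [dist_eq_norm, hx]; linarith)).trans ha
    linarith [hrough u S x hxball j y hxy, mul_le_profile hK0.le hA hε (norm_nonneg (x - y))]
  refine le_of_forall_pos_le_add fun e he ↦ ?_
  obtain ⟨κ, hdefect, hκ1, hκe, hκ⟩ := (hdefect.and ((eventually_mul_le_nhdsGT_zero 1 one_pos).and
    ((eventually_mul_le_nhdsGT_zero (4 * C) he).and self_mem_nhdsWithin))).exists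
  obtain ⟨δ, hδ, hδκ, hδC⟩ := D.exists_perturbation C hκ
  have hT : DoublingSetup U H ψ C L ε u a ρ b' K A κ δ 1 :=
    { hK.mono hb'pos.le hb'b with
      ε_pos := hε, ε_le_one := by linarith, A_nonneg := hA, κ_pos := hκ, κ_le_one := by linarith
      δ_pos := hδ, δ_le := hδκ, abs_le := hC ε hε u S, perturbation_le := hδC
      ball_subset := (ball_subset_ball (by linarith)).trans ha
      boundary_le := hboundary, hamiltonianDefectLE := hdefect δ hδκ
      curvature_ge := hKA.ge.trans' (by gcongr) }
  linarith [hT.sub_le_profile_add D S j hy, profile_le_mul hK0.le hA hε ‖a - y‖]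

end DominatingSlope

namespace UniformSubsolution

variable {Φ : Bool → E → ℝ} {c : ℝ}

theorem exists_norm_gradient_le_of_contact (D : ObstacleSystem U H ψ γ)
    (W : UniformSubsolution U H ψ Φ c) :
    ∃ P, ∀ᶠ ε in 𝓝[>] 0, ∀ u, PenalizedSolution U H ψ γ ε u → ∀ j, ∀ x ∈ closure U,
      ψ j x ≤ u j x - u (!j) x → ∀ k, ‖gradient (u k) x‖ ≤ P := by
  obtain ⟨C, hC, hC0⟩ := (D.eventually_abs_le.and (eventually_gt_atTop 0)).exists
  obtain ⟨d, hd, hcontact⟩ := W.exists_ball_subset_closure_of_contact D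
  obtain ⟨L, b, K, hb, hK⟩ := D.exists_dominatingSlope hC0 (show 0 < d / 5 by positivity)
  obtain ⟨P, hP, hlip⟩ := hK.exists_eventually_sub_le_mul D hC hb
  refine ⟨P, ?_⟩
  filter_upwards [hcontact, hlip] with ε hcontact hlip u S j x hx hθ k
  refine norm_gradient_le_of_eventually_abs_sub_le hP ?_
  filter_upwards [closedBall_mem_nhds x hK.ρ_pos] with y hy
  rw [mem_closedBall, dist_eq_norm] at hy
  have hball {z : E} (hz : ‖z - x‖ ≤ d / 5) : ball z (4 * (d / 5)) ⊆ closure U :=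
    (ball_subset_ball' (by rw [dist_eq_norm]; linarith)).trans (hcontact u S j x hx hθ)
  have hxy := hlip u S x (hball (by simpa using hK.ρ_pos.le)) k y (by rwa [norm_sub_rev])
  rw [norm_sub_rev] at hxy
  exact abs_sub_le_iff.2 ⟨hlip u S y (hball hy) k x hy, hxy⟩

end UniformSubsolution

end GradientBound

section PenaltyBound

variable {E : Type*} [NormedAddCommGroup E] [InnerProductSpace ℝ E] [FiniteDimensional ℝ E]

theorem continuous_laplacian_of_contDiff {f : E → ℝ} (hf : ContDiff ℝ 2 f) : Continuous (Δ f) := by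
  rw [laplacian_eq_iteratedFDeriv_orthonormalBasis f (stdOrthonormalBasis ℝ E)]
  exact continuous_finsetSum _ fun i _ ↦
    (ContinuousMultilinearMap.apply ℝ (fun _ : Fin 2 ↦ E) ℝ _).continuous.comp
      hf.continuous_iteratedFDeriv'

variable {U : Set E} {H : Bool → E → E → ℝ} {ψ Φ : Bool → E → ℝ} {γ : ℝ → ℝ} {c : ℝ}

/-- Subtract the two equations at a maximum point of `u k - u (!k) - ψ k`: the penalty of the other
equation vanishes there, and the Laplacians are compared with `Δ (ψ k)`. -/
theorem PenalizedSolution.penalty_le_of_isMax (D : ObstacleSystem U H ψ γ) {ε : ℝ} (hε : 0 < ε)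
    (hε1 : ε ≤ 1) {u : Bool → E → ℝ} (S : PenalizedSolution U H ψ γ ε u) {k : Bool} {x : E}
    (hx : x ∈ closure U) (hθ : 0 < u k x - u (!k) x - ψ k x)
    (hmax : ∀ y ∈ closure U, u k y - u (!k) y - ψ k y ≤ u k x - u (!k) x - ψ k x) {C M N : ℝ}
    (hu : ∀ j, |u j x| ≤ C) (hH : ∀ j, |H j x (gradient (u j) x)| ≤ M) (hψ : |Δ (ψ k) x| ≤ N) :
    γ ((u k x - u (!k) x - ψ k x) / ε) ≤ 2 * C + 2 * M + N := by
  obtain ⟨α, hα, hψα⟩ := D.ψ_pos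
  have hψk := hψα k x hx
  have hxU : x ∈ U := not_not.1 fun hxU ↦ by
    have hxf := D.mem_frontier hx hxU
    rw [S.eq_zero k x hxf, S.eq_zero (!k) x hxf] at hθ
    linarith
  have hcont (j : Bool) : ContDiffAt ℝ 2 (u j) x := S.contDiffAt D.isOpen j hxU
  have hlap : Δ (u k) x - Δ (u (!k)) x ≤ Δ (ψ k) x := by
    rw [← (hcont k).laplacian_sub (hcont (!k))]
    refine laplacian_le_of_isLocalMax_sub ((hcont k).sub (hcont (!k)))
      (D.contDiff_ψ k).contDiffAt ?_
    filter_upwards [D.isOpen.mem_nhds hxU] with y hy using hmax y (subset_closure hy)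
  have hlapε : ε * (Δ (u k) x - Δ (u (!k)) x) ≤ N :=
    calc ε * (Δ (u k) x - Δ (u (!k)) x) ≤ ε * N := by gcongr; exact hlap.trans (le_of_abs_le hψ)
      _ ≤ N := mul_le_of_le_one_left ((abs_nonneg _).trans hψ) hε1
  have hother : γ ((u (!k) x - u k x - ψ (!k) x) / ε) = 0 :=
    D.isPenalty.div_eq_zero (by linarith [hψα (!k) x hx]) hε
  have hpde := S.pde k x hxU
  have hpde' := S.pde (!k) x hxU
  rw [Bool.not_not, hother] at hpde'
  linarith [neg_le_of_abs_le (hu k), le_of_abs_le (hu (!k)), neg_le_of_abs_le (hH k),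
    le_of_abs_le (hH (!k))]

namespace UniformSubsolution

theorem exists_penalty_le (D : ObstacleSystem U H ψ γ) (W : UniformSubsolution U H ψ Φ c) :
    ∃ C, ∀ᶠ ε in 𝓝[>] 0, ∀ u, PenalizedSolution U H ψ γ ε u → ∀ j, ∀ x ∈ closure U,
      γ ((u j x - u (!j) x - ψ j x) / ε) ≤ C := by
  obtain ⟨C, hC⟩ := D.eventually_abs_le.exists
  obtain ⟨P, hP⟩ := W.exists_norm_gradient_le_of_contact D
  obtain ⟨M, hM⟩ := (D.eventually_abs_H_le P).exists
  obtain ⟨N, hN⟩ := (eventually_norm_le_of_isCompact D.isCompact_closure fun j ↦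
    (continuous_laplacian_of_contDiff (D.contDiff_ψ j)).continuousOn).exists
  refine ⟨max 0 (2 * C + 2 * M + N), ?_⟩
  filter_upwards [hP, eventually_mul_le_nhdsGT_zero 1 one_pos, self_mem_nhdsWithin]
    with ε hP hε1 hε u S j x hx
  obtain ⟨k, z, hz, hmax⟩ := exists_forall_le_of_isCompact D.isCompact_closure ⟨x, hx⟩
    fun j ↦ ((S.continuousOn j).sub (S.continuousOn (!j))).sub
      (D.contDiff_ψ j).continuous.continuousOn
  simp only [Pi.sub_apply] at hmax
  refine (D.isPenalty.monotone (div_le_div_of_nonneg_right (hmax j x hx) (le_of_lt hε))).trans ?_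
  rcases le_or_gt (u k z - u (!k) z - ψ k z) 0 with hθ | hθ
  · exact (D.isPenalty.div_eq_zero hθ hε).trans_le (le_max_left _ _)
  · have hgrad := hP u S k z hz (by linarith)
    exact (S.penalty_le_of_isMax D hε (by linarith) hz hθ (hmax k) (fun i ↦ hC ε hε u S i z hz)
      (fun i ↦ hM i z hz _ (hgrad i)) (hN k z hz)).trans (le_max_right _ _)

theorem exists_div_le_and_penalty_le (D : ObstacleSystem U H ψ γ)
    (W : UniformSubsolution U H ψ Φ c) :
    ∃ C > 0, ∀ᶠ ε in 𝓝[>] 0, ∀ u, PenalizedSolution U H ψ γ ε u → ∀ j, ∀ x ∈ closure U,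
      (u j x - u (!j) x - ψ j x) / ε ≤ C ∧ γ ((u j x - u (!j) x - ψ j x) / ε) ≤ C := by
  obtain ⟨B, hB⟩ := W.exists_penalty_le D
  obtain ⟨C, hγC, hBC, hC⟩ := ((D.isPenalty.tendsto_atTop.eventually_gt_atTop B).and
    ((eventually_ge_atTop B).and (eventually_gt_atTop 0))).exists
  refine ⟨C, hC, ?_⟩
  filter_upwards [hB] with ε hB u S j x hx
  have hγB := hB u S j x hx
  exact ⟨(D.isPenalty.monotone.reflect_lt (hγB.trans_lt hγC)).le, hγB.trans hBC⟩

end UniformSubsolution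

end PenaltyBound

theorem lipschitzWith_one_of_eq_zero_of_deriv_mem_Icc {γ : ℝ → ℝ} (hγ : Differentiable ℝ γ)
    (hγ0 : ∀ s ≤ 0, γ s = 0) (hγ' : ∀ s, 0 < s → deriv γ s ∈ Icc 0 1) : LipschitzWith 1 γ := by
  refine lipschitzWith_of_nnnorm_deriv_le hγ fun s ↦ ?_
  rw [← NNReal.coe_le_coe, coe_nnnorm, NNReal.coe_one, Real.norm_eq_abs]
  rcases le_or_gt s 0 with hs | hs
  · have hleft : HasDerivWithinAt γ 0 (Iic s) s :=
      (hasDerivWithinAt_const s _ 0).congr (fun t ht ↦ hγ0 t (le_trans ht hs)) (hγ0 s hs)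
    rw [(uniqueDiffWithinAt_Iic s).eq_deriv _ (hγ s).hasDerivAt.hasDerivWithinAt hleft, abs_zero]
    exact zero_le_one
  · rw [abs_of_nonneg (hγ' s hs).1]
    exact (hγ' s hs).2

theorem stmt_18_general {n : ℕ} (U : Set (EuclideanSpace ℝ (Fin n))) (hUo : IsOpen U)
    (hUb : Bornology.IsBounded U)
    (H₁ H₂ : EuclideanSpace ℝ (Fin n) → EuclideanSpace ℝ (Fin n) → ℝ)
    (hH₁ : ContinuousOn (fun q : EuclideanSpace ℝ (Fin n) × EuclideanSpace ℝ (Fin n) ↦ H₁ q.1 q.2)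
      (closure U ×ˢ univ))
    (hH₂ : ContinuousOn (fun q : EuclideanSpace ℝ (Fin n) × EuclideanSpace ℝ (Fin n) ↦ H₂ q.1 q.2)
      (closure U ×ˢ univ))
    (ψ₁ ψ₂ : EuclideanSpace ℝ (Fin n) → ℝ) (hψ₁ : ContDiff ℝ 2 ψ₁) (hψ₂ : ContDiff ℝ 2 ψ₂)
    (α : ℝ) (hα : 0 < α) (hψ₁α : ∀ x ∈ closure U, α ≤ ψ₁ x) (hψ₂α : ∀ x ∈ closure U, α ≤ ψ₂ x)
    (γ : ℝ → ℝ) (hγconv : ConvexOn ℝ univ γ) (hγ0 : ∀ s ≤ 0, γ s = 0) (hγlip : LipschitzWith 1 γ)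
    (hγtop : Tendsto γ atTop atTop)
    (hconv₁ : ∀ x ∈ closure U, ConvexOn ℝ univ (H₁ x))
    (hconv₂ : ∀ x ∈ closure U, ConvexOn ℝ univ (H₂ x))
    (hsuper₁ : ∀ M, ∃ R, ∀ x ∈ closure U, ∀ p, R ≤ ‖p‖ → M * ‖p‖ ≤ H₁ x p)
    (hsuper₂ : ∀ M, ∃ R, ∀ x ∈ closure U, ∀ p, R ≤ ‖p‖ → M * ‖p‖ ≤ H₂ x p)
    (Φ₁ Φ₂ : EuclideanSpace ℝ (Fin n) → ℝ)
    (hΦ₁ : DifferentiableOn ℝ Φ₁ U) (hΦ₁c : ContinuousOn Φ₁ (closure U))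
    (hΦ₁g : ContinuousOn (gradient Φ₁) (closure U))
    (hΦ₂ : DifferentiableOn ℝ Φ₂ U) (hΦ₂c : ContinuousOn Φ₂ (closure U))
    (hΦ₂g : ContinuousOn (gradient Φ₂) (closure U))
    (hΦ₁0 : ∀ x ∈ frontier U, Φ₁ x = 0) (hΦ₂0 : ∀ x ∈ frontier U, Φ₂ x = 0)
    (hΦobst : ∀ x ∈ closure U, -ψ₂ x ≤ Φ₁ x - Φ₂ x ∧ Φ₁ x - Φ₂ x ≤ ψ₁ x)
    (hΦsub₁ : ∀ x ∈ closure U, Φ₁ x + H₁ x (gradient Φ₁ x) < 0)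
    (hΦsub₂ : ∀ x ∈ closure U, Φ₂ x + H₂ x (gradient Φ₂ x) < 0) :
    ∃ C > (0 : ℝ), ∃ ε₀ ∈ Ioc (0 : ℝ) 1, ∀ ε ∈ Ioo (0 : ℝ) ε₀,
      ∀ u₁ u₂ : EuclideanSpace ℝ (Fin n) → ℝ,
        ContDiffOn ℝ 2 u₁ U → ContinuousOn u₁ (closure U) →
        ContinuousOn (gradient u₁) (closure U) →
        ContDiffOn ℝ 2 u₂ U → ContinuousOn u₂ (closure U) →
        ContinuousOn (gradient u₂) (closure U) →
        (∀ x ∈ U, u₁ x + H₁ x (gradient u₁ x) + γ ((u₁ x - u₂ x - ψ₁ x) / ε) = ε * lap u₁ x) →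
        (∀ x ∈ U, u₂ x + H₂ x (gradient u₂ x) + γ ((u₂ x - u₁ x - ψ₂ x) / ε) = ε * lap u₂ x) →
        (∀ x ∈ frontier U, u₁ x = 0) → (∀ x ∈ frontier U, u₂ x = 0) →
        ∀ x ∈ closure U,
          (u₁ x - u₂ x - ψ₁ x) / ε ≤ C ∧ (u₂ x - u₁ x - ψ₂ x) / ε ≤ C ∧
          γ ((u₁ x - u₂ x - ψ₁ x) / ε) ≤ C ∧ γ ((u₂ x - u₁ x - ψ₂ x) / ε) ≤ C := by
  have D : ObstacleSystem U (cond · H₂ H₁) (cond · ψ₂ ψ₁) γ :=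
    ⟨hUo, hUb, Bool.rec hH₁ hH₂, Bool.rec hconv₁ hconv₂, Bool.rec hsuper₁ hsuper₂,
      Bool.rec hψ₁ hψ₂, ⟨α, hα, Bool.rec hψ₁α hψ₂α⟩, hγconv, hγ0, hγlip, hγtop⟩
  obtain ⟨Ψ, c, W⟩ := D.exists_uniformSubsolution (Φ := (cond · Φ₂ Φ₁))
    (Bool.rec ⟨hΦ₁, hΦ₁c, hΦ₁0⟩ ⟨hΦ₂, hΦ₂c, hΦ₂0⟩) (Bool.rec hΦ₁g hΦ₂g)
    (Bool.rec (fun x hx ↦ (hΦobst x hx).2)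
      fun x hx ↦ sub_le_iff_le_add'.2 (neg_le_sub_iff_le_add.1 (hΦobst x hx).1))
    (Bool.rec hΦsub₁ hΦsub₂)
  obtain ⟨C, hC, hbound⟩ := W.exists_div_le_and_penalty_le D
  obtain ⟨ε₀, hε₀, hbound⟩ := (mem_nhdsGT_iff_exists_mem_Ioc_Ioo_subset one_pos).1 hbound
  refine ⟨C, hC, ε₀, hε₀, fun ε hε u₁ u₂ hu₁ hu₁c hu₁g hu₂ hu₂c hu₂g hpde₁ hpde₂ hu₁0 hu₂0
    x hx ↦ ?_⟩
  have hlap {u : EuclideanSpace ℝ (Fin n) → ℝ} (hu : ContDiffOn ℝ 2 u U) {x} (hx : x ∈ U) :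
      ε * lap u x = ε * Δ u x := by rw [lap_eq_laplacian (hu.contDiffAt (hUo.mem_nhds hx))]
  have S : PenalizedSolution U (cond · H₂ H₁) (cond · ψ₂ ψ₁) γ ε (cond · u₂ u₁) :=
    ⟨Bool.rec hu₁ hu₂, Bool.rec hu₁c hu₂c, Bool.rec hu₁g hu₂g, Bool.rec hu₁0 hu₂0,
      Bool.rec (fun x hx ↦ (hpde₁ x hx).trans (hlap hu₁ hx))
        fun x hx ↦ (hpde₂ x hx).trans (hlap hu₂ hx)⟩
  have h₁ := hbound hε _ S false x hx
  have h₂ := hbound hε _ S true x hx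
  exact ⟨h₁.1, h₂.1, h₁.2, h₂.2⟩

theorem stmt_18
    {n : ℕ} (hn : 2 ≤ n)
    (U : Set (EuclideanSpace ℝ (Fin n))) (hUo : IsOpen U) (hUb : Bornology.IsBounded U)
    (H₁ H₂ : EuclideanSpace ℝ (Fin n) → EuclideanSpace ℝ (Fin n) → ℝ)
    (hH₁ : ContDiff ℝ (⊤ : ℕ∞) (fun q : EuclideanSpace ℝ (Fin n) × EuclideanSpace ℝ (Fin n) => H₁ q.1 q.2))
    (hH₂ : ContDiff ℝ (⊤ : ℕ∞) (fun q : EuclideanSpace ℝ (Fin n) × EuclideanSpace ℝ (Fin n) => H₂ q.1 q.2))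
    (ψ₁ ψ₂ : EuclideanSpace ℝ (Fin n) → ℝ) (hψ₁ : ContDiff ℝ (⊤ : ℕ∞) ψ₁) (hψ₂ : ContDiff ℝ (⊤ : ℕ∞) ψ₂)
    (α : ℝ) (hα : 0 < α)
    (hψ₁α : ∀ x ∈ closure U, α ≤ ψ₁ x) (hψ₂α : ∀ x ∈ closure U, α ≤ ψ₂ x)
    (γ : ℝ → ℝ) (hγ : ContDiff ℝ (⊤ : ℕ∞) γ) (hγconv : ConvexOn ℝ Set.univ γ)
    (hγnn : ∀ s, 0 ≤ γ s)
    (hγ0 : ∀ s ≤ (0:ℝ), γ s = 0) (hγpos : ∀ s, 0 < s → 0 < γ s)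
    (hγ' : ∀ s, 0 < s → 0 < deriv γ s ∧ deriv γ s ≤ 1)
    (hγtop : Tendsto γ atTop atTop)
    -- (H5.1): convexity in p
    (h51a : ∀ x ∈ closure U, ConvexOn ℝ Set.univ (fun p : EuclideanSpace ℝ (Fin n) => H₁ x p))
    (h51b : ∀ x ∈ closure U, ConvexOn ℝ Set.univ (fun p : EuclideanSpace ℝ (Fin n) => H₂ x p))
    -- (H5.2): uniform superlinearity
    (h52a : ∀ M : ℝ, ∃ R : ℝ, ∀ x ∈ closure U, ∀ p : EuclideanSpace ℝ (Fin n), R ≤ ‖p‖ → M * ‖p‖ ≤ H₁ x p)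
    (h52b : ∀ M : ℝ, ∃ R : ℝ, ∀ x ∈ closure U, ∀ p : EuclideanSpace ℝ (Fin n), R ≤ ‖p‖ → M * ‖p‖ ≤ H₂ x p)
    -- (H5.3): bounded D_xH
    (Cb : ℝ)
    (h53a : ∀ x ∈ closure U, ∀ p : EuclideanSpace ℝ (Fin n), ‖gradient (fun y => H₁ y p) x‖ ≤ Cb)
    (h53b : ∀ x ∈ closure U, ∀ p : EuclideanSpace ℝ (Fin n), ‖gradient (fun y => H₂ y p) x‖ ≤ Cb)
    -- (H5.4): strict smooth subsolutions compatible with the obstacles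
    (Φ₁ Φ₂ : EuclideanSpace ℝ (Fin n) → ℝ)
    (hΦ₁2 : ContDiffOn ℝ 2 Φ₁ U) (hΦ₁c : ContinuousOn Φ₁ (closure U))
    (hΦ₁c1 : ContinuousOn (gradient Φ₁) (closure U))
    (hΦ₂2 : ContDiffOn ℝ 2 Φ₂ U) (hΦ₂c : ContinuousOn Φ₂ (closure U))
    (hΦ₂c1 : ContinuousOn (gradient Φ₂) (closure U))
    (hΦ₁0 : ∀ x ∈ frontier U, Φ₁ x = 0) (hΦ₂0 : ∀ x ∈ frontier U, Φ₂ x = 0)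
    (hΦobst : ∀ x ∈ closure U, -ψ₂ x ≤ Φ₁ x - Φ₂ x ∧ Φ₁ x - Φ₂ x ≤ ψ₁ x)
    (hΦsub₁ : ∀ x ∈ closure U, Φ₁ x + H₁ x (gradient Φ₁ x) < 0)
    (hΦsub₂ : ∀ x ∈ closure U, Φ₂ x + H₂ x (gradient Φ₂ x) < 0)
 :
    ∃ C > (0:ℝ), ∃ ε₀ ∈ Set.Ioc (0:ℝ) 1, ∀ ε ∈ Set.Ioo (0:ℝ) ε₀,
      ∀ u₁ u₂ : EuclideanSpace ℝ (Fin n) → ℝ,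
        ContDiffOn ℝ 2 u₁ U → ContinuousOn u₁ (closure U) →
        ContinuousOn (gradient u₁) (closure U) →
        ContDiffOn ℝ 2 u₂ U → ContinuousOn u₂ (closure U) →
        ContinuousOn (gradient u₂) (closure U) →
        (∀ x ∈ U, u₁ x + H₁ x (gradient u₁ x) + γ ((u₁ x - u₂ x - ψ₁ x) / ε) = ε * lap u₁ x) →
        (∀ x ∈ U, u₂ x + H₂ x (gradient u₂ x) + γ ((u₂ x - u₁ x - ψ₂ x) / ε) = ε * lap u₂ x) →
        (∀ x ∈ frontier U, u₁ x = 0) → (∀ x ∈ frontier U, u₂ x = 0) →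
        ∀ x ∈ closure U,
          (u₁ x - u₂ x - ψ₁ x) / ε ≤ C ∧ (u₂ x - u₁ x - ψ₂ x) / ε ≤ C ∧
          γ ((u₁ x - u₂ x - ψ₁ x) / ε) ≤ C ∧ γ ((u₂ x - u₁ x - ψ₂ x) / ε) ≤ C := by
  exact stmt_18_general U hUo hUb H₁ H₂ hH₁.continuous.continuousOn hH₂.continuous.continuousOn
    ψ₁ ψ₂ (contDiff_infty.1 hψ₁ 2) (contDiff_infty.1 hψ₂ 2) α hα hψ₁α hψ₂α γ hγconv hγ0
    (lipschitzWith_one_of_eq_zero_of_deriv_mem_Icc (hγ.differentiable (by simp)) hγ0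
      fun s hs ↦ ⟨(hγ' s hs).1.le, (hγ' s hs).2⟩)
    hγtop h51a h51b h52a h52b Φ₁ Φ₂ (hΦ₁2.differentiableOn two_ne_zero) hΦ₁c hΦ₁c1
    (hΦ₂2.differentiableOn two_ne_zero) hΦ₂c hΦ₂c1 hΦ₁0 hΦ₂0 hΦobst hΦsub₁ hΦsub₂
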